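/- arXiv:1309.4713 — 2 statements merged into one kernel-verified Lean document; each statement's English description precedes it below -/
import Mathlib

section
/- For every finite simple graph G on n vertices and every planar drawing Γ of G, there exists a subset V' of the vertex set of G with 2·|V'| ≥ n such that the restriction of Γ to the induced subgraph G[V'] is an outerplane drawing, i.e., every vertex point of V' lies in the closure of the unique unbounded connected component of the complement in ℝ² of the union of all vertex points and edge arcs of the restricted drawing. -/
open Set Bornology

/-- Points of the Euclidean plane. -/
abbrev Pt : Type := ℝ × ℝ

/-- `A` is an arc connecting `p` and `q`: the image of a continuous injective map
from `[0,1]` to the plane sending `0` to `p` and `1` to `q`. -/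
def IsArcBetween (A : Set Pt) (p q : Pt) : Prop :=
  ∃ f : ℝ → Pt, ContinuousOn f (Set.Icc 0 1) ∧ Set.InjOn f (Set.Icc 0 1) ∧
    f 0 = p ∧ f 1 = q ∧ A = f '' Set.Icc 0 1

/-- A planar drawing of a finite simple graph `G`: an injective placement of the
vertices in the plane, together with an arc for each edge joining the images of its
endpoints, such that no arc passes through the image of a vertex other than its two
endpoints, and two distinct arcs intersect only at images of shared endpoints. -/
structure PlanarDrawing {V : Type} [Fintype V] (G : SimpleGraph V) where
  ρ : V → Pt
  inj : Function.Injective ρ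
  arc : Sym2 V → Set Pt
  arc_isArc : ∀ u v : V, G.Adj u v → IsArcBetween (arc s(u, v)) (ρ u) (ρ v)
  vertex_mem : ∀ e ∈ G.edgeSet, ∀ w : V, ρ w ∈ arc e → w ∈ e
  arcs_cross : ∀ e ∈ G.edgeSet, ∀ e' ∈ G.edgeSet, e ≠ e' →
    ∀ x ∈ arc e ∩ arc e', ∃ w : V, w ∈ e ∧ w ∈ e' ∧ x = ρ w

/-- `pts` lies in the closure of every unbounded connected component of the
complement of the drawing set `D` (for a compact drawing set there is exactly one
such component, the outer face). -/
def IsOuterplanePair (D : Set Pt) (pts : Set Pt) : Prop :=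
  ∀ U : Set Pt, (∃ x ∉ D, U = connectedComponentIn Dᶜ x) →
    ¬ Bornology.IsBounded U → pts ⊆ closure U

/-- The edges of `G` having both endpoints in `V'`. -/
def restrictedEdges {V : Type} (G : SimpleGraph V) (V' : Set V) : Set (Sym2 V) :=
  {e | e ∈ G.edgeSet ∧ ∀ v ∈ e, v ∈ V'}

/-- The union of the vertex points of `V'` and the arcs of the edges in `E`,
in the drawing `Γ`. -/
def drawingUnion {V : Type} [Fintype V] {G : SimpleGraph V}
    (Γ : PlanarDrawing G) (V' : Set V) (E : Set (Sym2 V)) : Set Pt :=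
  (Γ.ρ '' V') ∪ ⋃ e ∈ E, Γ.arc e


/-! ### Continuous logarithms -/

/-- `p` and `q` lie in a common preconnected subset of the complement of `X`. -/
def Jn {E : Type*} [TopologicalSpace E] (X : Set E) (p q : E) : Prop :=
  ∃ C : Set E, IsPreconnected C ∧ C ⊆ Xᶜ ∧ p ∈ C ∧ q ∈ C

/-- A nonvanishing function on a compact star-shaped set has a continuous logarithm. -/
lemma exists_log_star {E : Type*} [NormedAddCommGroup E] [NormedSpace ℝ E] {S : Set E}
    (hS : IsCompact S) {c : E} (hst : StarConvex ℝ c S) (f : E → ℂ) (hf : ContinuousOn f S)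
    (h0 : ∀ z ∈ S, f z ≠ 0) :
    ∃ g : E → ℂ, ContinuousOn g S ∧ ∀ z ∈ S, Complex.exp (g z) = f z := by
  rcases S.eq_empty_or_nonempty with rfl | hne
  · exact ⟨fun _ => 0, continuousOn_empty _, by simp⟩
  obtain ⟨z0, hz0, hmin⟩ := hS.exists_isMinOn hne hf.norm
  have hε : 0 < ‖f z0‖ := norm_pos_iff.mpr (h0 z0 hz0)
  have hUC := hS.uniformContinuousOn_of_continuous hf
  obtain ⟨δ, hδ, hUC⟩ := Metric.uniformContinuousOn_iff.mp hUC _ hε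
  obtain ⟨M, hM⟩ := hS.isBounded.subset_closedBall c
  obtain ⟨N, hN⟩ := exists_nat_gt (M / δ)
  have hM' : ∀ z ∈ S, ‖z - c‖ ≤ M := fun z hz => by
    have := hM hz; rwa [mem_closedBall_iff_norm] at this
  have hM0 : 0 ≤ M := (norm_nonneg _).trans (hM' z0 hz0)
  have hNpos : (0 : ℝ) < N := lt_of_le_of_lt (by positivity) hN
  let P : ℕ → E → E := fun k z => c + ((k : ℝ) / N) • (z - c)
  have hP : ∀ k ≤ N, ∀ z ∈ S, P k z ∈ S := by
    intro k hk z hz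
    have h1 : ((k : ℝ) / N) ≤ 1 := by
      rw [div_le_one hNpos]; exact_mod_cast hk
    exact hst.add_smul_sub_mem hz (by positivity) h1
  have hPc : ∀ k, Continuous (P k) := fun k => by fun_prop
  have hfP : ∀ k ≤ N, ContinuousOn (fun z => f (P k z)) S := fun k hk =>
    hf.comp (hPc k).continuousOn (fun z hz => hP k hk z hz)
  have hcS : c ∈ S := by
    have := hP 0 (Nat.zero_le _) z0 hz0
    simpa [P] using this
  have hslit : ∀ k, k + 1 ≤ N → ∀ z ∈ S, f (P (k+1) z) / f (P k z) ∈ Complex.slitPlane := by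
    intro k hk z hz
    have hk' : k ≤ N := by omega
    have hd : dist (P (k+1) z) (P k z) < δ := by
      have : P (k+1) z - P k z = ((1 : ℝ) / N) • (z - c) := by
        simp only [P, add_sub_add_left_eq_sub, ← sub_smul]
        congr 1
        push_cast; ring
      rw [dist_eq_norm, this, norm_smul, Real.norm_of_nonneg (by positivity)]
      calc 1 / (N:ℝ) * ‖z - c‖ ≤ 1 / (N:ℝ) * M := by gcongr; exact hM' z hz
        _ < δ := by
          rw [div_lt_iff₀ hδ] at hN
          rw [one_div, inv_mul_lt_iff₀ hNpos]; exact hN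
    have h1 := hUC _ (hP _ hk z hz) _ (hP _ hk' z hz) hd
    have hne0 := h0 _ (hP k hk' z hz)
    have h2 : ‖f z0‖ ≤ ‖f (P k z)‖ := hmin (hP k hk' z hz)
    have : f (P (k+1) z) / f (P k z) = 1 + (f (P (k+1) z) - f (P k z)) / f (P k z) := by
      field_simp; ring
    rw [this]
    apply Complex.mem_slitPlane_of_norm_lt_one
    rw [norm_div, div_lt_one (norm_pos_iff.mpr hne0), ← dist_eq_norm]
    exact h1.trans_le h2
  refine ⟨fun z => Complex.log (f c) +
    ∑ k ∈ Finset.range N, Complex.log (f (P (k+1) z) / f (P k z)), ?_, ?_⟩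
  · refine continuousOn_const.add (continuousOn_finsetSum _ ?_)
    intro k hk
    have hk : k + 1 ≤ N := Finset.mem_range.mp hk
    apply ContinuousOn.clog
    · exact (hfP _ hk).div (hfP _ (by omega)) (fun z hz => h0 _ (hP k (by omega) z hz))
    · exact fun z hz => hslit k hk z hz
  · intro z hz
    have key : ∀ m ≤ N, Complex.exp (Complex.log (f c) +
        ∑ k ∈ Finset.range m, Complex.log (f (P (k+1) z) / f (P k z))) = f (P m z) := by
      intro m
      induction m with
      | zero =>
        intro _
        simp [P, Complex.exp_log (h0 c hcS)]
      | succ m ih =>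
        intro hm
        have hne1 := h0 _ (hP (m+1) hm z hz)
        have hne0 := h0 _ (hP m (by omega) z hz)
        rw [Finset.sum_range_succ, ← add_assoc, Complex.exp_add, ih (by omega),
          Complex.exp_log (div_ne_zero hne1 hne0)]
        field_simp
    have := key N le_rfl
    rw [this]
    simp [P, div_self hNpos.ne']

/-- A nonvanishing function on the plane cannot equal `z - p` on a circle around `p`. -/
lemma no_nonvanishing (f : ℂ → ℂ) (hf : Continuous f) (h0 : ∀ z, f z ≠ 0) (p : ℂ) (R : ℝ)
    (hR : 0 < R) (h : ∀ z, ‖z - p‖ = R → f z = z - p) : False := by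
  obtain ⟨g, hg, hexp⟩ := exists_log_star (isCompact_closedBall p R)
    ((convex_closedBall p R).starConvex (Metric.mem_closedBall_self hR.le)) f hf.continuousOn
    (fun z _ => h0 z)
  let c : ℝ → ℂ := fun θ => p + R * Complex.exp (θ * Complex.I)
  have hcn : ∀ θ, ‖c θ - p‖ = R := by
    intro θ
    simp [c, Complex.norm_exp_ofReal_mul_I, abs_of_pos hR]
  have hcm : ∀ θ, c θ ∈ Metric.closedBall p R := fun θ => by
    rw [mem_closedBall_iff_norm, hcn]
  let G : ℝ → ℂ := fun θ => g (c θ) - θ * Complex.I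
  have hG : Continuous G := by
    refine Continuous.sub (hg.comp_continuous (by fun_prop) hcm) (by fun_prop)
  have hGe : ∀ θ, Complex.exp (G θ) = R := by
    intro θ
    simp only [G]
    rw [Complex.exp_sub, hexp _ (hcm θ), h _ (hcn θ)]
    simp only [c, add_sub_cancel_left]
    field_simp [Complex.exp_ne_zero]
  have h2 : G (2 * Real.pi) = G 0 - 2 * Real.pi * Complex.I := by
    simp [G, c]
  have hi : (G (2*Real.pi)).im = (G 0).im - 2 * Real.pi := by
    rw [h2]; simp
  have hmem : (G 0).im - Real.pi ∈ Icc ((G (2*Real.pi)).im) ((G 0).im) := by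
    rw [hi]; constructor <;> linarith [Real.pi_pos]
  obtain ⟨θ, _, hθ⟩ := intermediate_value_Icc' (f := fun t => (G t).im) (by positivity)
    (Complex.continuous_im.comp hG).continuousOn hmem
  have e1 : G θ = G 0 + ((((G θ).re - (G 0).re : ℝ) : ℂ) - Real.pi * Complex.I) := by
    apply Complex.ext
    · simp
    · simp at hθ ⊢; linarith
  have e2 := hGe θ
  rw [e1, Complex.exp_add, hGe, Complex.exp_sub, Complex.exp_pi_mul_I] at e2
  have hRne : (R : ℂ) ≠ 0 := by exact_mod_cast hR.ne'
  have e3 : Complex.exp (((G θ).re - (G 0).re : ℝ) : ℂ) = -1 := by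
    have : Complex.exp (((G θ).re - (G 0).re : ℝ) : ℂ) / -1 = 1 := by
      apply mul_left_cancel₀ hRne; rw [e2, mul_one]
    rw [div_neg, div_one, neg_eq_iff_eq_neg] at this
    exact this
  rw [← Complex.ofReal_exp] at e3
  have e4 : Real.exp ((G θ).re - (G 0).re) = -1 := by exact_mod_cast e3
  linarith [Real.exp_pos ((G θ).re - (G 0).re)]

/-- Points joined in the complement of `K` give a logarithm on `K`. -/
lemma log_of_joined {K : Set ℂ} (hK : IsClosed K) {p q : ℂ} (h : Jn K p q) :
    ∃ g : ℂ → ℂ, ContinuousOn g K ∧ ∀ z ∈ K, Complex.exp (g z) = (z - p) / (z - q) := by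
  obtain ⟨C, hC, hCK, hp, hq⟩ := h
  refine hC.induction₂ (fun p q => ∃ g : ℂ → ℂ, ContinuousOn g K ∧
    ∀ z ∈ K, Complex.exp (g z) = (z - p) / (z - q)) ?_ ?_ ?_ hp hq
  · intro x hx
    have hxK : x ∉ K := hCK hx
    obtain ⟨ε, hε, hb⟩ := Metric.isOpen_iff.mp hK.isOpen_compl x hxK
    apply eventually_nhdsWithin_of_eventually_nhds
    filter_upwards [Metric.ball_mem_nhds x hε] with y hy
    have hne : ∀ z ∈ K, z - y ≠ 0 := fun z hz h0 => by
      rw [sub_eq_zero] at h0; subst h0; exact hb hy hz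
    have hnx : ∀ z ∈ K, z - x ≠ 0 := fun z hz h0 => by
      rw [sub_eq_zero] at h0; subst h0; exact hxK hz
    refine ⟨fun z => -Complex.log ((z - y) / (z - x)), ?_, ?_⟩
    · refine (ContinuousOn.clog (ContinuousOn.div (by fun_prop) (by fun_prop) hnx) ?_).neg
      intro z hz
      have : (z - y) / (z - x) = 1 + (x - y) / (z - x) := by
        have := hnx z hz
        field_simp; ring
      change (z - y) / (z - x) ∈ Complex.slitPlane
      rw [this]
      apply Complex.mem_slitPlane_of_norm_lt_one
      rw [norm_div, div_lt_one (norm_pos_iff.mpr (hnx z hz))]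
      have h1 : ‖x - y‖ < ε := by rw [← dist_eq_norm, dist_comm]; exact hy
      have h2 : ε ≤ ‖z - x‖ := by
        by_contra hlt
        push Not at hlt
        exact hb (by rw [Metric.mem_ball, dist_eq_norm]; exact hlt) hz
      linarith
    · intro z hz
      rw [Complex.exp_neg, Complex.exp_log (div_ne_zero (hne z hz) (hnx z hz)), inv_div]
  · rintro x y w hx hy hw ⟨g, hg, hge⟩ ⟨k, hk, hke⟩
    refine ⟨fun z => g z + k z, hg.add hk, fun z hz => ?_⟩
    have hy' : z - y ≠ 0 := fun h0 => by
      rw [sub_eq_zero] at h0; subst h0; exact hCK hy hz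
    rw [Complex.exp_add, hge z hz, hke z hz]
    field_simp
  · rintro x y hx hy ⟨g, hg, hge⟩
    refine ⟨fun z => -g z, hg.neg, fun z hz => ?_⟩
    rw [Complex.exp_neg, hge z hz, inv_div]

section comp
variable {E : Type*} [TopologicalSpace E]

lemma Jn.symm {X : Set E} {p q : E} (h : Jn X p q) : Jn X q p := by
  obtain ⟨C, a, b, c, d⟩ := h
  exact ⟨C, a, b, d, c⟩

lemma Jn.trans {X : Set E} {p q r : E} (h : Jn X p q) (h' : Jn X q r) : Jn X p r := by
  obtain ⟨C, a, b, c, d⟩ := h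
  obtain ⟨C', a', b', c', d'⟩ := h'
  exact ⟨C ∪ C', IsPreconnected.union q d c' a a', union_subset b b', Or.inl c, Or.inr d'⟩

lemma Jn.notMem_left {X : Set E} {p q : E} (h : Jn X p q) : p ∉ X := by
  obtain ⟨C, a, b, c, d⟩ := h
  exact b c

lemma Jn.notMem_right {X : Set E} {p q : E} (h : Jn X p q) : q ∉ X := h.symm.notMem_left

lemma jn_iff {X : Set E} {p q : E} : Jn X p q ↔ p ∉ X ∧ q ∈ connectedComponentIn Xᶜ p := by
  constructor
  · rintro ⟨C, hC, hCX, hp, hq⟩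
    exact ⟨hCX hp, hC.subset_connectedComponentIn hp hCX hq⟩
  · rintro ⟨hp, hq⟩
    exact ⟨_, isPreconnected_connectedComponentIn, connectedComponentIn_subset _ _,
      mem_connectedComponentIn hp, hq⟩

/-- A component of the complement of a closed set is relatively closed. -/
lemma mem_comp_of_mem_closure [LocallyConnectedSpace E] {X : Set E} (hX : IsClosed X) {a x : E}
    (hx : x ∈ closure (connectedComponentIn Xᶜ a)) (hxX : x ∉ X) :
    x ∈ connectedComponentIn Xᶜ a := by
  have ho : IsOpen (connectedComponentIn Xᶜ x) := hX.isOpen_compl.connectedComponentIn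
  obtain ⟨y, hy1, hy2⟩ := mem_closure_iff.mp hx _ ho (mem_connectedComponentIn hxX)
  have := connectedComponentIn_eq hy1
  rw [connectedComponentIn_eq hy2, ← this]
  exact mem_connectedComponentIn hxX

end comp

lemma bounded_comp_false {X : Set ℂ} (hX : IsCompact X) {p q : ℂ} (hp : p ∉ X)
    (hq : ¬ Jn X p q) (g : ℂ → ℂ) (hg : ContinuousOn g X)
    (hge : ∀ z ∈ X, Complex.exp (g z) = (z - p) / (z - q)) (hqX : q ∉ X)
    (hb : IsBounded (connectedComponentIn Xᶜ p)) : False := by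
  classical
  set P := connectedComponentIn Xᶜ p with hP
  have hqP : q ∉ P := fun h => hq (jn_iff.mpr ⟨hp, h⟩)
  have hPo : IsOpen P := hX.isClosed.isOpen_compl.connectedComponentIn
  have hpP : p ∈ P := mem_connectedComponentIn hp
  obtain ⟨G, hG⟩ := ContinuousMap.exists_restrict_eq hX.isClosed
    (⟨X.domRestrict g, continuousOn_iff_continuous_domRestrict.mp hg⟩ : C(X, ℂ))
  have hG' : ∀ z ∈ X, G z = g z := fun z hz => by
    have := congrArg (fun F => F ⟨z, hz⟩) hG
    exact this
  have hfr : ∀ z ∈ frontier P, z ∈ X := by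
    intro z hz
    by_contra hzX
    rw [hPo.frontier_eq] at hz
    exact hz.2 (mem_comp_of_mem_closure hX.isClosed hz.1 hzX)
  obtain ⟨R, hR⟩ := hb.subset_ball p
  have hRpos : 0 < R := by
    have := hR hpP
    simpa using this
  refine no_nonvanishing (fun z => if z ∈ P then (z - q) * Complex.exp (G z) else z - p)
    ?_ ?_ p R hRpos ?_
  · refine Continuous.if ?_ (by fun_prop) (by fun_prop)
    intro z hz
    have hzX := hfr z hz
    have hzq : z - q ≠ 0 := fun h0 => by
      rw [sub_eq_zero] at h0; subst h0; exact hqX hzX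
    rw [hG' z hzX, hge z hzX]
    field_simp
  · intro z
    by_cases hz : z ∈ P
    · simp only [hz, if_true]
      refine mul_ne_zero (fun h0 => ?_) (Complex.exp_ne_zero _)
      rw [sub_eq_zero] at h0; subst h0; exact hqP hz
    · simp only [hz, if_false]
      intro h0
      rw [sub_eq_zero] at h0; subst h0; exact hz hpP
  · intro z hz
    have : z ∉ P := fun h => by
      have := hR h
      rw [mem_ball_iff_norm, hz] at this
      exact lt_irrefl _ this
    simp only [this, if_false]

lemma jn_far {X : Set ℂ} (hX : IsCompact X) :
    ∃ M : Set ℂ, IsCompact M ∧ ∀ p q, p ∉ M → q ∉ M → Jn X p q := by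
  obtain ⟨R, hR⟩ := hX.isBounded.subset_closedBall 0
  have hconn : IsPreconnected ((fun x : ℝ × ℝ => (x.1 : ℂ) * Complex.exp (x.2 * Complex.I)) ''
      (Ioi (max R 0) ×ˢ univ)) := by
    refine (isPreconnected_Ioi.prod isPreconnected_univ).image _ (Continuous.continuousOn ?_)
    fun_prop
  refine ⟨Metric.closedBall 0 (max R 0), isCompact_closedBall _ _, fun p q hp hq => ?_⟩
  have hm : ∀ p : ℂ, p ∉ Metric.closedBall (0:ℂ) (max R 0) →
      p ∈ ((fun x : ℝ × ℝ => (x.1 : ℂ) * Complex.exp (x.2 * Complex.I)) ''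
      (Ioi (max R 0) ×ˢ univ)) := by
    intro p hp
    refine ⟨(‖p‖, p.arg), ⟨?_, mem_univ _⟩, Complex.norm_mul_exp_arg_mul_I p⟩
    simpa using hp
  refine ⟨_, hconn, ?_, hm p hp, hm q hq⟩
  rintro _ ⟨⟨r, θ⟩, ⟨hr, -⟩, rfl⟩ hx
  have := hR hx
  have hr' : max R 0 < r := hr
  have hr0 : 0 < r := (le_max_right _ _).trans_lt hr'
  simp [Complex.norm_exp_ofReal_mul_I, abs_of_pos hr0] at this
  linarith [le_max_left R 0]

/-- A logarithm of `(z - p) / (z - q)` on `X` shows that `X` does not separate `p` and `q`. -/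
lemma joined_of_log {X : Set ℂ} (hX : IsCompact X) {p q : ℂ} (hp : p ∉ X) (hq : q ∉ X)
    (g : ℂ → ℂ) (hg : ContinuousOn g X)
    (hge : ∀ z ∈ X, Complex.exp (g z) = (z - p) / (z - q)) : Jn X p q := by
  by_contra hJ
  obtain ⟨M, hM, hfar⟩ := jn_far hX
  by_cases hb : IsBounded (connectedComponentIn Xᶜ p)
  · exact bounded_comp_false hX hp hJ g hg hge hq hb
  by_cases hb' : IsBounded (connectedComponentIn Xᶜ q)
  · refine bounded_comp_false hX hq (fun h => hJ h.symm) (fun z => - g z) hg.neg ?_ hp hb'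
    intro z hz
    rw [Complex.exp_neg, hge z hz, inv_div]
  have h1 : ∃ a ∈ connectedComponentIn Xᶜ p, a ∉ M := by
    by_contra hcon
    push Not at hcon
    exact hb (hM.isBounded.subset hcon)
  have h2 : ∃ a ∈ connectedComponentIn Xᶜ q, a ∉ M := by
    by_contra hcon
    push Not at hcon
    exact hb' (hM.isBounded.subset hcon)
  obtain ⟨a, ha, haM⟩ := h1
  obtain ⟨b, hb, hbM⟩ := h2
  exact hJ (((jn_iff.mpr ⟨hp, ha⟩).trans (hfar a b haM hbM)).trans (jn_iff.mpr ⟨hq, hb⟩).symm)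

/-- Every nonvanishing continuous function on `τ` has a continuous logarithm. -/
def LogProp {E : Type*} [TopologicalSpace E] (τ : Set E) : Prop :=
  ∀ f : E → ℂ, ContinuousOn f τ → (∀ z ∈ τ, f z ≠ 0) →
    ∃ g : E → ℂ, ContinuousOn g τ ∧ ∀ z ∈ τ, Complex.exp (g z) = f z

lemma logProp_singleton {E : Type*} [TopologicalSpace E] (x : E) : LogProp ({x} : Set E) := by
  intro f hf h0
  refine ⟨fun _ => Complex.log (f x), continuousOn_const, ?_⟩
  rintro z rfl
  exact Complex.exp_log (h0 _ rfl)

lemma logProp_arc {E : Type*} [TopologicalSpace E] [T2Space E] (γ : ℝ → E) (a b : ℝ)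
    (hγ : ContinuousOn γ (Icc a b)) (hi : InjOn γ (Icc a b)) : LogProp (γ '' Icc a b) := by
  intro f hf h0
  rcases lt_or_ge b a with hab | hab
  · refine ⟨fun _ => 0, ?_, ?_⟩ <;> simp [Icc_eq_empty_of_lt hab]
  obtain ⟨g, hg, hge⟩ := exists_log_star (isCompact_Icc (a := a) (b := b))
    ((convex_Icc a b).starConvex (left_mem_Icc.mpr hab)) (fun t => f (γ t))
    (hf.comp hγ (mapsTo_image _ _)) (fun t ht => h0 _ (mem_image_of_mem _ ht))
  have hinv : ContinuousOn (Function.invFunOn γ (Icc a b)) (γ '' Icc a b) := by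
    rw [continuousOn_iff_continuous_domRestrict]
    let φ : Icc a b → γ '' Icc a b := fun t => ⟨γ t, mem_image_of_mem _ t.2⟩
    have hφ : Topology.IsQuotientMap φ := by
      refine IsClosedMap.isQuotientMap ?_ ?_ ?_
      · exact (Continuous.subtype_mk (continuousOn_iff_continuous_domRestrict.mp hγ) _).isClosedMap
      · exact Continuous.subtype_mk (continuousOn_iff_continuous_domRestrict.mp hγ) _
      · rintro ⟨_, t, ht, rfl⟩
        exact ⟨⟨t, ht⟩, rfl⟩
    rw [hφ.continuous_iff]
    have : (γ '' Icc a b).domRestrict (Function.invFunOn γ (Icc a b)) ∘ φ = Subtype.val := by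
      funext t
      exact hi.leftInvOn_invFunOn t.2
    rw [this]
    exact continuous_subtype_val
  refine ⟨fun z => g (Function.invFunOn γ (Icc a b) z), hg.comp hinv ?_, ?_⟩
  · rintro _ ⟨t, ht, rfl⟩
    rw [hi.leftInvOn_invFunOn ht]; exact ht
  · rintro _ ⟨t, ht, rfl⟩
    dsimp only
    rw [hi.leftInvOn_invFunOn ht, hge t ht]

/-- A special case of Janiszewski's theorem, in `ℂ`. -/
lemma janiszewskiC {K τ : Set ℂ} (hK : IsCompact K) (hτ : IsCompact τ) (hl : LogProp τ)
    (hs : (τ ∩ K).Subsingleton) {p q : ℂ} (hp : p ∉ τ) (hq : q ∉ τ) (h : Jn K p q) :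
    Jn (K ∪ τ) p q := by
  classical
  obtain ⟨g, hg, hge⟩ := log_of_joined hK.isClosed h
  have hτp : ∀ z ∈ τ, z - p ≠ 0 := fun z hz h0 => by
    rw [sub_eq_zero] at h0; subst h0; exact hp hz
  have hτq : ∀ z ∈ τ, z - q ≠ 0 := fun z hz h0 => by
    rw [sub_eq_zero] at h0; subst h0; exact hq hz
  obtain ⟨k, hk, hke⟩ := hl (fun z => (z - p) / (z - q))
    (ContinuousOn.div (by fun_prop) (by fun_prop) hτq)
    (fun z hz => div_ne_zero (hτp z hz) (hτq z hz))
  obtain ⟨k', hk', hke', hag⟩ : ∃ k' : ℂ → ℂ, ContinuousOn k' τ ∧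
      (∀ z ∈ τ, Complex.exp (k' z) = (z - p) / (z - q)) ∧ ∀ z ∈ τ ∩ K, k' z = g z := by
    rcases (τ ∩ K).eq_empty_or_nonempty with he | ⟨x, hxτ, hxK⟩
    · exact ⟨k, hk, hke, by simp [he]⟩
    · refine ⟨fun z => k z + (g x - k x), hk.add continuousOn_const, ?_, ?_⟩
      · intro z hz
        rw [Complex.exp_add, Complex.exp_sub, hke z hz, hge x hxK, hke x hxτ,
          div_self (div_ne_zero (hτp x hxτ) (hτq x hxτ)), mul_one]
      · intro z hz
        rw [hs hz ⟨hxτ, hxK⟩]; ring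
  have hpX : p ∉ K ∪ τ := fun hh => hh.elim h.notMem_left hp
  have hqX : q ∉ K ∪ τ := fun hh => hh.elim h.notMem_right hq
  have e1 : EqOn (fun z => if z ∈ K then g z else k' z) g K := fun z hz => by simp [hz]
  have e2 : EqOn (fun z => if z ∈ K then g z else k' z) k' τ := fun z hz => by
    by_cases hzK : z ∈ K
    · simp [hzK, hag z ⟨hz, hzK⟩]
    · simp [hzK]
  refine joined_of_log (hK.union hτ) hpX hqX (fun z => if z ∈ K then g z else k' z) ?_ ?_
  · exact (hg.congr e1).union_of_isClosed (hk'.congr e2) hK.isClosed hτ.isClosed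
  · rintro z (hz | hz)
    · rw [show (if z ∈ K then g z else k' z) = g z from e1 hz]; exact hge z hz
    · rw [show (if z ∈ K then g z else k' z) = k' z from e2 hz]; exact hke' z hz

lemma Jn.image {E F : Type*} [TopologicalSpace E] [TopologicalSpace F] (φ : E ≃ₜ F) {X : Set E}
    {p q : E} (h : Jn X p q) : Jn (φ '' X) (φ p) (φ q) := by
  obtain ⟨C, hC, hCX, hp, hq⟩ := h
  refine ⟨φ '' C, hC.image _ φ.continuous.continuousOn, ?_, mem_image_of_mem _ hp,
    mem_image_of_mem _ hq⟩
  rw [← image_compl_eq φ.bijective]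
  exact image_mono hCX

/-- Transfer of the logarithm property along a homeomorphism. -/
lemma LogProp.image {E F : Type*} [TopologicalSpace E] [TopologicalSpace F] (φ : E ≃ₜ F)
    {X : Set E} (h : LogProp X) : LogProp (φ '' X) := by
  intro f hf h0
  obtain ⟨g, hg, hge⟩ := h (fun z => f (φ z)) (hf.comp φ.continuous.continuousOn
    (mapsTo_image _ _)) (fun z hz => h0 _ (mem_image_of_mem _ hz))
  refine ⟨fun z => g (φ.symm z), hg.comp φ.symm.continuous.continuousOn ?_, ?_⟩
  · rintro _ ⟨x, hx, rfl⟩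
    simpa using hx
  · rintro _ ⟨x, hx, rfl⟩
    simpa using hge x hx

lemma janiszewski {K τ : Set (ℝ × ℝ)} (hK : IsCompact K) (hτ : IsCompact τ) (hl : LogProp τ)
    (hs : (τ ∩ K).Subsingleton) {p q : ℝ × ℝ} (hp : p ∉ τ) (hq : q ∉ τ) (h : Jn K p q) :
    Jn (K ∪ τ) p q := by
  let φ : ℂ ≃ₜ ℝ × ℝ := Complex.equivRealProdCLM.toHomeomorph
  have h1 := janiszewskiC (hK.image φ.symm.continuous) (hτ.image φ.symm.continuous)
    (hl.image φ.symm) (by rw [← image_inter φ.symm.injective]; exact hs.image _)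
    (p := φ.symm p) (q := φ.symm q) (by rwa [φ.symm.injective.mem_set_image])
    (by rwa [φ.symm.injective.mem_set_image]) (h.image φ.symm)
  have h2 := h1.image φ
  simpa [← image_union, image_image] using h2

lemma jn_far' {X : Set (ℝ × ℝ)} (hX : IsCompact X) :
    ∃ M : Set (ℝ × ℝ), IsCompact M ∧ ∀ p q, p ∉ M → q ∉ M → Jn X p q := by
  let φ : ℂ ≃ₜ ℝ × ℝ := Complex.equivRealProdCLM.toHomeomorph
  obtain ⟨M, hM, h⟩ := jn_far (hX.image φ.symm.continuous)
  refine ⟨φ '' M, hM.image φ.continuous, fun p q hp hq => ?_⟩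
  have h1 := (h (φ.symm p) (φ.symm q) (fun hh => hp ⟨_, hh, by simp⟩)
    (fun hh => hq ⟨_, hh, by simp⟩)).image φ
  simpa [image_image] using h1


/-! ### The combinatorial argument -/

/-- State of the vertex-colouring procedure. -/
structure AlgoState {V : Type} [DecidableEq V] (H : V → V → Prop) (O : Set V)
    (Exp : Set V → Set V) (W A B : Finset V) : Prop where
  hO : O ⊆ W
  hA : A ⊆ W
  hB : B ⊆ W
  card : A.card + B.card ≤ W.card
  expA : (W : Set V) ⊆ Exp A
  expB : (W : Set V) ⊆ Exp B
  nbA : ∀ x ∈ A, ∀ y, H x y → y ∈ Exp A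
  nbB : ∀ x ∈ B, ∀ y, H x y → y ∈ Exp B
  att : ∀ w ∈ W, w ∈ O ∨ ∃ z ∈ W, H w z
  tok : ∀ v ∈ W, ∀ v' ∈ W, v ∉ A → v ∉ B → v' ∉ A → v' ∉ B →
    (∃ y ∉ W, H v y) → (∃ y ∉ W, H v' y) → v = v'

lemma AlgoState.swap {V : Type} [DecidableEq V] {H : V → V → Prop} {O : Set V}
    {Exp : Set V → Set V} {W A B : Finset V} (h : AlgoState H O Exp W A B) :
    AlgoState H O Exp W B A where
  hO := h.hO
  hA := h.hB
  hB := h.hA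
  card := by have := h.card; omega
  expA := h.expB
  expB := h.expA
  nbA := h.nbB
  nbB := h.nbA
  att := h.att
  tok := fun v hv v' hv' h1 h2 h3 h4 h5 h6 => h.tok v hv v' hv' h2 h1 h4 h3 h5 h6

/-- Core step: `c` has colour `A`, `d` receives colour `B`. -/
lemma AlgoState.step {V : Type} [DecidableEq V] {H : V → V → Prop} {O : Set V}
    {Exp : Set V → Set V} (mono : ∀ A B, A ⊆ B → Exp A ⊆ Exp B)
    (E2 : ∀ D d y, d ∈ Exp D → H d y → y ∈ Exp (insert d D))
    (symm : ∀ u v, H u v → H v u)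
    {W A B : Finset V} (h : AlgoState H O Exp W A B) {c d y : V} (hc : c ∈ A)
    (hd : d ∈ W) (hy : y ∉ W) (hcy : H c y) (hdy : H d y)
    (htok : ∀ v ∈ W, v ∉ A → v ∉ B → (∃ y ∉ W, H v y) → v = d) :
    AlgoState H O Exp (insert y W) A (insert d B) where
  hO := h.hO.trans (by simp)
  hA := h.hA.trans (by simp)
  hB := by
    intro x hx
    rcases Finset.mem_insert.mp hx with rfl | hx
    · exact Finset.mem_insert_of_mem hd
    · exact Finset.mem_insert_of_mem (h.hB hx)
  card := by
    have := h.card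
    have h1 := Finset.card_insert_le d B
    rw [Finset.card_insert_of_notMem hy]
    omega
  expA := by
    intro x hx
    rcases Finset.mem_insert.mp (Finset.mem_coe.mp hx) with rfl | hx
    · exact h.nbA c hc _ hcy
    · exact h.expA hx
  expB := by
    intro x hx
    rcases Finset.mem_insert.mp (Finset.mem_coe.mp hx) with rfl | hx
    · rw [Finset.coe_insert]
      exact E2 _ _ _ (h.expB hd) hdy
    · exact mono _ _ (by simp) (h.expB hx)
  nbA := h.nbA
  nbB := by
    intro x hx z hz
    rcases Finset.mem_insert.mp hx with rfl | hx
    · rw [Finset.coe_insert]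
      exact E2 _ _ _ (h.expB hd) hz
    · exact mono _ _ (by simp) (h.nbB x hx z hz)
  att := by
    intro x hx
    rcases Finset.mem_insert.mp hx with rfl | hx
    · exact Or.inr ⟨d, Finset.mem_insert_of_mem hd, symm _ _ hdy⟩
    · rcases h.att x hx with h1 | ⟨z, hz, hxz⟩
      · exact Or.inl h1
      · exact Or.inr ⟨z, Finset.mem_insert_of_mem hz, hxz⟩
  tok := by
    have key : ∀ v ∈ insert y W, v ∉ A → v ∉ insert d B → (∃ z ∉ insert y W, H v z) → v = y := by
      rintro v hv hvA hvB ⟨z, hz, hvz⟩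
      rcases Finset.mem_insert.mp hv with rfl | hv
      · rfl
      · exfalso
        apply hvB
        have := htok v hv hvA (fun hb => hvB (Finset.mem_insert_of_mem hb))
          ⟨z, fun hb => hz (Finset.mem_insert_of_mem hb), hvz⟩
        rw [this]
        exact Finset.mem_insert_self _ _
    intro v hv v' hv' h1 h2 h3 h4 h5 h6
    rw [key v hv h1 h2 h5, key v' hv' h3 h4 h6]

lemma algo {V : Type} [Fintype V] [DecidableEq V] (H : V → V → Prop) (O : Set V)
    (Exp : Set V → Set V) (mono : ∀ A B, A ⊆ B → Exp A ⊆ Exp B) (E0 : O ⊆ Exp ∅)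
    (E2 : ∀ D d y, d ∈ Exp D → H d y → y ∈ Exp (insert d D))
    (symm : ∀ u v, H u v → H v u)
    (hL : ∀ W : Set V, O ⊆ W → ∀ w ∈ W, (w ∈ O ∨ ∃ z ∈ W, H w z) → (∃ y ∉ W, H w y) →
      ∃ x ∈ W, ∃ y ∉ W, x ≠ w ∧ H w y ∧ H x y)
    (hC : ∀ W : Set V, O ⊆ W → W ≠ univ → ∃ w ∈ W, ∃ y ∉ W, H w y) :
    ∃ D : Finset V, 2 * D.card ≤ Fintype.card V ∧ ∀ x, x ∈ Exp D := by
  classical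
  -- one full step
  have step : ∀ W A B : Finset V, AlgoState H O Exp W A B → W ≠ Finset.univ →
      ∃ W' A' B' : Finset V, AlgoState H O Exp W' A' B' ∧ W.card < W'.card := by
    intro W A B h hW
    obtain ⟨w, hwW, hlive, hfirst⟩ : ∃ w ∈ W, (∃ y ∉ W, H w y) ∧
        ∀ v ∈ W, v ∉ A → v ∉ B → (∃ y ∉ W, H v y) → v = w := by
      by_cases ht : ∃ v ∈ W, v ∉ A ∧ v ∉ B ∧ ∃ y ∉ W, H v y
      · obtain ⟨v, hv, hvA, hvB, hvl⟩ := ht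
        exact ⟨v, hv, hvl, fun v' hv' h1 h2 h3 => h.tok v' hv' v hv h1 h2 hvA hvB h3 hvl⟩
      · obtain ⟨w, hw, y, hy, hwy⟩ := hC W h.hO (by
          intro he; apply hW; exact_mod_cast he)
        exact ⟨w, hw, ⟨y, hy, hwy⟩, fun v hv h1 h2 h3 => (ht ⟨v, hv, h1, h2, h3⟩).elim⟩
    obtain ⟨x, hxW, y, hy, hxw, hwy, hxy⟩ := hL W h.hO w hwW (h.att w hwW) hlive
    have hxW : x ∈ W := hxW
    have hy : y ∉ W := hy
    -- choose `c` coloured and `d` the other one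
    obtain ⟨c, d, hcc, hdW, hcy, hdy, htok⟩ : ∃ c d, (c ∈ A ∨ c ∈ B) ∧ d ∈ W ∧ H c y ∧ H d y ∧
        ∀ v ∈ W, v ∉ A → v ∉ B → (∃ y ∉ W, H v y) → v = d := by
      by_cases hwn : w ∈ A ∨ w ∈ B
      · refine ⟨w, x, hwn, hxW, hwy, hxy, fun v hv h1 h2 h3 => ?_⟩
        have := hfirst v hv h1 h2 h3
        subst this
        exact (hwn.elim h1 h2).elim
      · refine ⟨x, w, ?_, hwW, hxy, hwy, hfirst⟩
        by_contra hxn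
        push Not at hxn
        exact hxw (hfirst x hxW hxn.1 hxn.2 ⟨y, hy, hxy⟩)
    rcases hcc with hcA | hcB
    · exact ⟨_, _, _, h.step mono E2 symm hcA hdW hy hcy hdy htok, by
        rw [Finset.card_insert_of_notMem hy]; omega⟩
    · exact ⟨_, _, _, h.swap.step mono E2 symm hcB hdW hy hcy hdy
        (fun v hv h1 h2 h3 => htok v hv h2 h1 h3), by
        rw [Finset.card_insert_of_notMem hy]; omega⟩
  have start : AlgoState H O Exp O.toFinset O.toFinset ∅ := by
    have e : ∀ S, O ⊆ Exp S := fun S => E0.trans (mono _ _ (empty_subset _))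
    refine ⟨by simp, by simp, by simp, by simp, by simpa using e _, by simpa using e ∅, ?_, by simp,
      fun w hw => Or.inl (by simpa using hw), ?_⟩
    · intro x hx y hxy
      refine mono _ _ ?_ (E2 ∅ x y (E0 (by simpa using hx)) hxy)
      simpa using hx
    · intro v hv v' hv' h1
      exact (h1 hv).elim
  have fin : ∀ k : ℕ, ∀ W A B : Finset V, AlgoState H O Exp W A B →
      Fintype.card V - W.card ≤ k → ∃ A B, AlgoState H O Exp Finset.univ A B := by
    intro k
    induction k with
    | zero =>
      intro W A B h hk
      have : W = Finset.univ := by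
        rw [← Finset.card_eq_iff_eq_univ]
        have := Finset.card_le_univ W
        omega
      subst this
      exact ⟨A, B, h⟩
    | succ k ih =>
      intro W A B h hk
      by_cases hW : W = Finset.univ
      · subst hW
        exact ⟨A, B, h⟩
      · obtain ⟨W', A', B', h', hlt⟩ := step W A B h hW
        have := Finset.card_le_univ W'
        exact ih W' A' B' h' (by omega)
  obtain ⟨A, B, h⟩ := fin _ _ _ _ start le_rfl
  have hc := h.card
  rw [Finset.card_univ] at hc
  by_cases hle : A.card ≤ B.card
  · exact ⟨A, by omega, fun x => h.expA (by simp)⟩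
  · exact ⟨B, by omega, fun x => h.expB (by simp)⟩

/-! ### Removing arcs from the plane -/

lemma jn_family {ι : Type*} (s : Finset ι) (τ : ι → Set Pt) {K : Set Pt} (hK : IsCompact K)
    (hτ : ∀ i ∈ s, IsCompact (τ i)) (hl : ∀ i ∈ s, LogProp (τ i))
    (hs : ∀ i ∈ s, (τ i ∩ (K ∪ ⋃ j ∈ {j | j ∈ s ∧ j ≠ i}, τ j)).Subsingleton) {p q : Pt}
    (hp : ∀ i ∈ s, p ∉ τ i) (hq : ∀ i ∈ s, q ∉ τ i) (h : Jn K p q) :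
    Jn (K ∪ ⋃ i ∈ s, τ i) p q := by
  classical
  induction s using Finset.induction_on with
  | empty => simpa using h
  | insert a s ha ih =>
    have h1 := ih (fun i hi => hτ i (Finset.mem_insert_of_mem hi))
      (fun i hi => hl i (Finset.mem_insert_of_mem hi))
      (fun i hi => (hs i (Finset.mem_insert_of_mem hi)).anti (by
        refine inter_subset_inter_right _ (union_subset_union_right _ ?_)
        refine biUnion_subset_biUnion_left ?_
        rintro j ⟨hj, hji⟩
        exact ⟨Finset.mem_insert_of_mem hj, hji⟩))
      (fun i hi => hp i (Finset.mem_insert_of_mem hi))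
      (fun i hi => hq i (Finset.mem_insert_of_mem hi))
    have hcomp : IsCompact (K ∪ ⋃ i ∈ s, τ i) :=
      hK.union (s.isCompact_biUnion (fun i hi => hτ i (Finset.mem_insert_of_mem hi)))
    have h2 := janiszewski hcomp (hτ a (Finset.mem_insert_self _ _))
      (hl a (Finset.mem_insert_self _ _)) ((hs a (Finset.mem_insert_self _ _)).anti (by
        refine inter_subset_inter_right _ (union_subset_union_right _ ?_)
        refine biUnion_subset_biUnion_left ?_
        intro j hj
        exact ⟨Finset.mem_insert_of_mem hj, fun e => ha (e ▸ hj)⟩))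
      (hp a (Finset.mem_insert_self _ _)) (hq a (Finset.mem_insert_self _ _)) h1
    rw [Finset.set_biUnion_insert, union_comm (τ a), ← union_assoc]
    exact h2

/-- If a face `h` of `X` meets `X` only along `K` and nonseparating arcs, then the
component of `Kᶜ` around `h` meets `X` only in these arcs. -/
lemma face_false {ι : Type*} (s : Finset ι) (τ : ι → Set Pt) {K X : Set Pt} (hK : IsCompact K)
    (hX : IsClosed X)
    (hτ : ∀ i ∈ s, IsCompact (τ i)) (hl : ∀ i ∈ s, LogProp (τ i))
    (hs : ∀ i ∈ s, (τ i ∩ (K ∪ ⋃ j ∈ {j | j ∈ s ∧ j ≠ i}, τ j)).Subsingleton) {a q : Pt}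
    (haX : a ∉ X) (hτX : ∀ i ∈ s, τ i ⊆ X)
    (hcl : closure (connectedComponentIn Xᶜ a) ∩ X ⊆ K ∪ ⋃ i ∈ s, τ i)
    (hqX : q ∈ X) (hq : ∀ i ∈ s, q ∉ τ i) (h : Jn K a q) : False := by
  obtain ⟨C, hC, hCX, haC, hqC⟩ := jn_family s τ hK hτ hl hs
    (fun i hi hh => haX (hτX i hi hh)) hq h
  have hsub : C ⊆ connectedComponentIn Xᶜ a := by
    refine hC.subset_of_closure_inter_subset hX.isOpen_compl.connectedComponentIn
      ⟨a, haC, mem_connectedComponentIn haX⟩ ?_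
    rintro x ⟨hx, hxC⟩
    refine mem_comp_of_mem_closure hX hx (fun hxX => ?_)
    exact hCX hxC (hcl ⟨hx, hxX⟩)
  exact connectedComponentIn_subset _ _ (hsub hqC) hqX


section Drawing
variable {V : Type} [Fintype V] {G : SimpleGraph V} (Γ : PlanarDrawing G)

/-- The restriction of the drawing to the vertex set `S`, as a point set. -/
def DU (S : Set V) : Set Pt := drawingUnion Γ S (restrictedEdges G S)

lemma mem_DU {S : Set V} {x : Pt} : x ∈ DU Γ S ↔ (∃ v ∈ S, Γ.ρ v = x) ∨
    ∃ e ∈ G.edgeSet, (∀ v ∈ e, v ∈ S) ∧ x ∈ Γ.arc e := by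
  simp only [DU, drawingUnion, restrictedEdges, mem_union, mem_image, mem_iUnion, mem_ofPred_eq]
  constructor
  · rintro (h | ⟨e, ⟨h1, h2⟩, h3⟩)
    · exact Or.inl h
    · exact Or.inr ⟨e, h1, h2, h3⟩
  · rintro (h | ⟨e, h1, h2, h3⟩)
    · exact Or.inl h
    · exact Or.inr ⟨e, ⟨h1, h2⟩, h3⟩

lemma DU_mono {S T : Set V} (h : S ⊆ T) : DU Γ S ⊆ DU Γ T := by
  intro x hx
  rw [mem_DU] at hx ⊢
  rcases hx with ⟨v, hv, e⟩ | ⟨e, h1, h2, h3⟩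
  · exact Or.inl ⟨v, h hv, e⟩
  · exact Or.inr ⟨e, h1, fun v hv => h (h2 v hv), h3⟩

lemma arc_subset_full {e : Sym2 V} (he : e ∈ G.edgeSet) : Γ.arc e ⊆ DU Γ univ := by
  intro x hx
  rw [mem_DU]
  exact Or.inr ⟨e, he, fun _ _ => mem_univ _, hx⟩

lemma rho_mem_full (v : V) : Γ.ρ v ∈ DU Γ univ := by
  rw [mem_DU]; exact Or.inl ⟨v, mem_univ _, rfl⟩

lemma arc_compact {e : Sym2 V} (he : e ∈ G.edgeSet) : IsCompact (Γ.arc e) := by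
  induction e with
  | _ u v =>
    obtain ⟨f, hf, -, -, -, h⟩ := Γ.arc_isArc u v he
    rw [h]; exact isCompact_Icc.image_of_continuousOn hf

lemma DU_compact (S : Set V) : IsCompact (DU Γ S) := by
  unfold DU drawingUnion
  refine ((toFinite S).image _).isCompact.union ?_
  exact (toFinite _).isCompact_biUnion fun e he => arc_compact Γ he.1

lemma DU_closed (S : Set V) : IsClosed (DU Γ S) := (DU_compact Γ S).isClosed

/-- Parametrization of an edge. -/
lemma edge_param {u v : V} (h : G.Adj u v) : ∃ f : ℝ → Pt, ContinuousOn f (Icc 0 1) ∧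
    InjOn f (Icc 0 1) ∧ f 0 = Γ.ρ u ∧ f 1 = Γ.ρ v ∧ Γ.arc s(u, v) = f '' Icc 0 1 :=
  Γ.arc_isArc u v h

lemma edge_ends {u v : V} (h : G.Adj u v) {f : ℝ → Pt} (hi : InjOn f (Icc 0 1))
    (h0 : f 0 = Γ.ρ u) (h1 : f 1 = Γ.ρ v) (ha : Γ.arc s(u, v) = f '' Icc 0 1)
    {t : ℝ} (ht : t ∈ Icc (0:ℝ) 1) {w : V} (hw : f t = Γ.ρ w) :
    (w = u ∧ t = 0) ∨ (w = v ∧ t = 1) := by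
  have h2 := Γ.vertex_mem s(u, v) h w (by rw [ha, ← hw]; exact ⟨t, ht, rfl⟩)
  rw [Sym2.mem_iff] at h2
  rcases h2 with rfl | rfl
  · exact Or.inl ⟨rfl, hi ht (by simp) (by rw [hw, h0])⟩
  · exact Or.inr ⟨rfl, hi ht (by simp) (by rw [hw, h1])⟩

/-- The half open edge starting at a deleted vertex avoids the restricted drawing. -/
lemma half_edge {S : Set V} {u v : V} (h : G.Adj u v) {f : ℝ → Pt} (hi : InjOn f (Icc 0 1))
    (h0 : f 0 = Γ.ρ u) (h1 : f 1 = Γ.ρ v) (ha : Γ.arc s(u, v) = f '' Icc 0 1)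
    (hu : u ∉ S) {t : ℝ} (ht : t ∈ Ico (0:ℝ) 1) : f t ∉ DU Γ S := by
  have htI : t ∈ Icc (0:ℝ) 1 := ⟨ht.1, ht.2.le⟩
  intro hx
  rw [mem_DU] at hx
  rcases hx with ⟨w, hw, e⟩ | ⟨e, he, h2, h3⟩
  · rcases edge_ends Γ h hi h0 h1 ha htI e.symm with ⟨rfl, _⟩ | ⟨_, h⟩
    · exact hu hw
    · exact ht.2.ne h
  · have hne : e ≠ s(u, v) := by
      rintro rfl
      exact hu (h2 u (by simp))
    obtain ⟨w, hw, hw', hx⟩ := Γ.arcs_cross e he s(u, v) h hne (f t)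
      ⟨h3, by rw [ha]; exact ⟨t, htI, rfl⟩⟩
    rcases edge_ends Γ h hi h0 h1 ha htI hx with ⟨rfl, _⟩ | ⟨_, h⟩
    · exact hu (h2 _ hw)
    · exact ht.2.ne h

lemma half_edge_preconn {f : ℝ → Pt} (hf : ContinuousOn f (Icc 0 1)) :
    IsPreconnected (f '' Ico 0 1) :=
  isPreconnected_Ico.image _ (hf.mono Ico_subset_Icc_self)

/-- Start truncation. -/
lemma trunc_start {f : ℝ → Pt} (hf : ContinuousOn f (Icc 0 1)) {C : Set Pt} (hC : IsClosed C)
    (P : Prop) (hP : P → f 0 ∉ C) :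
    ∃ a : ℝ, 0 ≤ a ∧ a < 1/2 ∧ (P → 0 < a) ∧ ∀ t, 0 ≤ t → t < a → f t ∉ C := by
  by_cases h : P
  · have h1 : ∀ᶠ t in nhdsWithin (0:ℝ) (Icc 0 1), f t ∈ Cᶜ :=
      (hf 0 (by simp)) (hC.isOpen_compl.mem_nhds (hP h))
    rw [Filter.Eventually, Metric.mem_nhdsWithin_iff] at h1
    obtain ⟨ε, hε, h2⟩ := h1
    refine ⟨min ε (1/4), by positivity, lt_of_le_of_lt (min_le_right _ _) (by norm_num),
      fun _ => by positivity, fun t h0 ht => ?_⟩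
    have h3 := lt_of_lt_of_le ht (min_le_left _ _)
    have h4 := lt_of_lt_of_le ht (min_le_right _ _)
    refine h2 ⟨?_, h0, by linarith⟩
    rw [Metric.mem_ball, Real.dist_eq, sub_zero, abs_of_nonneg h0]; exact h3
  · exact ⟨0, le_rfl, by norm_num, fun h' => absurd h' h, fun t h0 h1 => absurd h1 (not_lt.2 h0)⟩

lemma edge_trunc {S : Set V} {C : Set Pt} (hC : IsClosed C) (hS : ∀ v ∈ S, Γ.ρ v ∉ C)
    {e : Sym2 V} (he : e ∈ G.edgeSet) : ∃ τ : Set Pt, IsCompact τ ∧ LogProp τ ∧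
      τ ⊆ Γ.arc e ∧ (∀ v ∈ S, Γ.ρ v ∉ τ) ∧ Γ.arc e ∩ C ⊆ τ := by
  induction e with
  | _ u v =>
    have h : G.Adj u v := he
    obtain ⟨f, hf, hi, h0, h1, ha⟩ := edge_param Γ h
    obtain ⟨a, a0, a1, a2, a3⟩ := trunc_start hf hC (u ∈ S) (fun h => by rw [h0]; exact hS u h)
    obtain ⟨b, b0, b1, b2, b3⟩ := trunc_start (f := fun t => f (1 - t))
      (hf.comp (by fun_prop) (fun t ht => ⟨by linarith [ht.2], by linarith [ht.1]⟩)) hC (v ∈ S)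
      (fun h => by simp only [sub_zero]; rw [h1]; exact hS v h)
    have hsub : Icc a (1 - b) ⊆ Icc 0 1 := Icc_subset_Icc a0 (by linarith)
    refine ⟨f '' Icc a (1 - b), isCompact_Icc.image_of_continuousOn (hf.mono hsub),
      logProp_arc f a (1-b) (hf.mono hsub) (hi.mono hsub), ?_, ?_, ?_⟩
    · rw [ha]; exact image_mono hsub
    · rintro w hw ⟨t, ht, e⟩
      rcases edge_ends Γ h hi h0 h1 ha (hsub ht) e with ⟨rfl, h'⟩ | ⟨rfl, h'⟩
      · have := a2 hw; linarith [ht.1]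
      · have := b2 hw; linarith [ht.2]
    · rintro x ⟨hx, hxC⟩
      rw [ha] at hx
      obtain ⟨t, ht, rfl⟩ := hx
      refine ⟨t, ⟨?_, ?_⟩, rfl⟩
      · by_contra hlt
        exact a3 t ht.1 (not_le.1 hlt) hxC
      · by_contra hlt
        refine b3 (1 - t) (by linarith [ht.2]) (by linarith [not_le.1 hlt]) ?_
        simpa using hxC

/-- Removing vertices which are not on a face does not merge that face with anything. -/
lemma face_stable {S : Set V} {a p : Pt} (haX : a ∉ DU Γ univ)
    (hS : ∀ v ∈ S, Γ.ρ v ∉ closure (connectedComponentIn (DU Γ univ)ᶜ a))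
    (hp : p ∈ DU Γ univ) (h : Jn (DU Γ Sᶜ) a p) : False := by
  classical
  -- find a vertex in `S` joined to `a`
  obtain ⟨v, hv, hj⟩ : ∃ v ∈ S, Jn (DU Γ Sᶜ) a (Γ.ρ v) := by
    have hpK := h.notMem_right
    have hvert : ∀ w, Γ.ρ w = p → ∃ v ∈ S, Jn (DU Γ Sᶜ) a (Γ.ρ v) := by
      intro w hw
      refine ⟨w, ?_, hw ▸ h⟩
      by_contra hwS
      exact hpK ((mem_DU Γ).2 (Or.inl ⟨w, hwS, hw⟩))
    have key : ∀ u v, G.Adj u v → u ∈ S → p ∈ Γ.arc s(u, v) →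
        ∃ v ∈ S, Jn (DU Γ Sᶜ) a (Γ.ρ v) := by
      intro u v huv hu hpa
      obtain ⟨f, hf, hi, h0, h1, ha⟩ := edge_param Γ huv
      rw [ha] at hpa
      obtain ⟨t, ht, rfl⟩ := hpa
      rcases ht.2.eq_or_lt with rfl | hlt
      · exact hvert v h1.symm
      · refine ⟨u, hu, h.trans ⟨f '' Ico 0 1, half_edge_preconn hf, ?_, ⟨t, ⟨ht.1, hlt⟩, rfl⟩,
          ⟨0, by simp, h0⟩⟩⟩
        rintro _ ⟨t', ht', rfl⟩
        exact half_edge Γ huv hi h0 h1 ha (by simpa using hu) ht'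
    rcases (mem_DU Γ).1 hp with ⟨w, -, hw⟩ | ⟨e, he, -, hpe⟩
    · exact hvert w hw
    · have hex : ∃ v ∈ e, v ∈ S := by
        by_contra hcon
        push Not at hcon
        exact hpK ((mem_DU Γ).2 (Or.inr ⟨e, he, fun v hv => hcon v hv, hpe⟩))
      obtain ⟨u, hue, hu⟩ := hex
      obtain ⟨v, rfl⟩ := Sym2.mem_iff_exists.1 hue
      exact key u v he hu hpe
  choose! τ h1 h2 h3 h4 h5 using fun (e : Sym2 V) (he : e ∈ G.edgeSet) =>
    edge_trunc Γ (S := S) isClosed_closure hS he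
  let s : Finset (Sym2 V) := (toFinite {e : Sym2 V | e ∈ G.edgeSet ∧ ∃ v ∈ e, v ∈ S}).toFinset
  have hs : ∀ e, e ∈ s ↔ e ∈ G.edgeSet ∧ ∃ v ∈ e, v ∈ S := by
    intro e; simp [s]
  refine face_false (K := DU Γ Sᶜ) (X := DU Γ univ) (a := a) (q := Γ.ρ v) s τ (DU_compact Γ _) (DU_closed Γ _)
    (fun e he => h1 e ((hs e).1 he).1) (fun e he => h2 e ((hs e).1 he).1) ?_ haX
    (fun e he => (h3 e ((hs e).1 he).1).trans (arc_subset_full Γ ((hs e).1 he).1)) ?_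
    (rho_mem_full Γ v) (fun e he => h4 e ((hs e).1 he).1 v hv) hj
  · intro e he
    obtain ⟨heE, u, hue, hu⟩ := (hs e).1 he
    have key : ∀ x ∈ τ e ∩ (DU Γ Sᶜ ∪ ⋃ j ∈ {j | j ∈ s ∧ j ≠ e}, τ j),
        ∃ w ∈ e, w ∉ S ∧ x = Γ.ρ w := by
      rintro x ⟨hx, hx' | hx'⟩
      · rcases (mem_DU Γ).1 hx' with ⟨w, hw, rfl⟩ | ⟨e', he', hS', hx'⟩
        · exact ⟨w, Γ.vertex_mem e heE w (h3 e heE hx), hw, rfl⟩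
        · have hne : e ≠ e' := by
            rintro rfl; exact hS' u hue hu
          obtain ⟨w, hw, hw', hxw⟩ := Γ.arcs_cross e heE e' he' hne x ⟨h3 e heE hx, hx'⟩
          exact ⟨w, hw, hS' w hw', hxw⟩
      · simp only [mem_iUnion, mem_ofPred_eq] at hx'
        obtain ⟨e', ⟨he', hne⟩, hx'⟩ := hx'
        have he'E := ((hs e').1 he').1
        obtain ⟨w, hw, hw', hxw⟩ := Γ.arcs_cross e heE e' he'E hne.symm x
          ⟨h3 e heE hx, h3 e' he'E hx'⟩
        exact ⟨w, hw, fun hwS => h4 e heE w hwS (hxw ▸ hx), hxw⟩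
    obtain ⟨v', rfl⟩ := Sym2.mem_iff_exists.1 hue
    have key2 : ∀ x ∈ τ s(u, v') ∩ (DU Γ Sᶜ ∪ ⋃ j ∈ {j | j ∈ s ∧ j ≠ s(u, v')}, τ j),
        x = Γ.ρ v' := by
      intro x hx
      obtain ⟨w, hw, hwS, rfl⟩ := key x hx
      rcases Sym2.mem_iff.1 hw with rfl | rfl
      · exact absurd hu hwS
      · rfl
    intro x hx y hy
    rw [key2 x hx, key2 y hy]
  · rintro x ⟨hxc, hx⟩
    rcases (mem_DU Γ).1 hx with ⟨w, -, rfl⟩ | ⟨e, he, -, hxe⟩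
    · left
      exact (mem_DU Γ).2 (Or.inl ⟨w, fun hw => hS w hw hxc, rfl⟩)
    · by_cases hex : ∃ v ∈ e, v ∈ S
      · right
        simp only [mem_iUnion]
        exact ⟨e, (hs e).2 ⟨he, hex⟩, h5 e he ⟨hxe, hxc⟩⟩
      · left
        push Not at hex
        exact (mem_DU Γ).2 (Or.inr ⟨e, he, fun v hv => hex v hv, hxe⟩)
end Drawing


lemma sep {F K0 K1 K2 : Set Pt} (cF : IsClosed F) (c1 : IsClosed K1) (c2 : IsClosed K2)
    (hF : F ⊆ K1 ∪ K2) (h12 : K1 ∩ K2 ⊆ K0) (P : Pt → Prop)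
    (hP : ∀ a b, Jn F a b → P a → P b)
    (H1 : ∀ a p, a ∉ F → P a → p ∈ F → Jn K1 a p → False)
    (H2 : ∀ a p, a ∉ F → ¬ P a → p ∈ F → Jn K2 a p → False) {p q : Pt}
    (hp : (p ∈ F ∧ p ∉ K1) ∨ (p ∉ F ∧ ¬ P p)) (hq : (q ∈ F ∧ q ∉ K2) ∨ (q ∉ F ∧ P q))
    (h : Jn K0 p q) : False := by
  have hopen : ∀ (K : Set Pt) (Q : Pt → Prop), IsClosed K → (∀ a b, Jn F a b → Q a → Q b) →
      (∀ a p, a ∉ F → ¬ Q a → p ∈ F → Jn K a p → False) →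
      IsOpen {x | (x ∈ F ∧ x ∉ K) ∨ (x ∉ F ∧ Q x)} := by
    intro K Q cK hQ hH
    rw [isOpen_iff_mem_nhds]
    rintro x (⟨hx, hxK⟩ | ⟨hx, hxQ⟩)
    · refine Filter.mem_of_superset
        (cK.isOpen_compl.connectedComponentIn.mem_nhds (mem_connectedComponentIn hxK)) ?_
      intro y hy
      have hj : Jn K x y := jn_iff.2 ⟨hxK, hy⟩
      by_cases hyF : y ∈ F
      · exact Or.inl ⟨hyF, hj.notMem_right⟩
      · refine Or.inr ⟨hyF, ?_⟩
        by_contra hc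
        exact hH y x hyF hc hx hj.symm
    · refine Filter.mem_of_superset
        (cF.isOpen_compl.connectedComponentIn.mem_nhds (mem_connectedComponentIn hx)) ?_
      intro y hy
      have hj : Jn F x y := jn_iff.2 ⟨hx, hy⟩
      exact Or.inr ⟨hj.notMem_right, hQ x y hj hxQ⟩
  have oA := hopen K1 (fun x => ¬ P x) c1 (fun a b hab ha hb => ha (hP b a hab.symm hb))
    (fun a p h1 h2 => H1 a p h1 (not_not.1 h2))
  have oB := hopen K2 P c2 hP H2
  obtain ⟨C, hC, hCK, hpC, hqC⟩ := h
  obtain ⟨x, hxC, hxA, hxB⟩ := hC _ _ oA oB (by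
    intro x hx
    by_cases hxF : x ∈ F
    · by_cases h1 : x ∈ K1
      · exact Or.inr (Or.inl ⟨hxF, fun h2 => hCK hx (h12 ⟨h1, h2⟩)⟩)
      · exact Or.inl (Or.inl ⟨hxF, h1⟩)
    · by_cases hPx : P x
      · exact Or.inr (Or.inr ⟨hxF, hPx⟩)
      · exact Or.inl (Or.inr ⟨hxF, hPx⟩)) ⟨p, hpC, hp⟩ ⟨q, hqC, hq⟩
  rcases hxA with ⟨h1, h2⟩ | ⟨h1, h2⟩ <;> rcases hxB with ⟨h3, h4⟩ | ⟨h3, h4⟩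
  · exact (hF h1).elim h2 h4
  · exact h3 h1
  · exact h1 h3
  · exact h2 h4

lemma Jn.mono {X Y : Set Pt} {p q : Pt} (h : X ⊆ Y) (hj : Jn Y p q) : Jn X p q := by
  obtain ⟨C, a, b, c, d⟩ := hj
  exact ⟨C, a, b.trans (compl_subset_compl.2 h), c, d⟩

section Drawing
variable {V : Type} [Fintype V] {G : SimpleGraph V} (Γ : PlanarDrawing G)

/-- The face of `a` touches the vertex `v`. -/
def Tch (a : Pt) (v : V) : Prop := Γ.ρ v ∈ closure (connectedComponentIn (DU Γ univ)ᶜ a)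

lemma Tch.congr {a b : Pt} {v : V} (h : Jn (DU Γ univ) a b) (ht : Tch Γ a v) : Tch Γ b v := by
  unfold Tch at *
  rw [← connectedComponentIn_eq (jn_iff.1 h).2]; exact ht

lemma rho_notMem {S : Set V} {w : V} (hw : w ∉ S) : Γ.ρ w ∉ DU Γ S := by
  intro h
  rcases (mem_DU Γ).1 h with ⟨v, hv, e⟩ | ⟨e, he, hS, hx⟩
  · exact hw (Γ.inj e ▸ hv)
  · exact hw (hS w (Γ.vertex_mem e he w hx))

lemma face_join {S : Set V} {w : V} (hw : w ∉ S) {a : Pt} (ha : a ∉ DU Γ univ)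
    (ht : Tch Γ a w) : ∃ C, IsPreconnected C ∧ C ⊆ (DU Γ S)ᶜ ∧ Γ.ρ w ∈ C ∧
      connectedComponentIn (DU Γ univ)ᶜ a ⊆ C ∧ a ∈ C := by
  refine ⟨insert (Γ.ρ w) (connectedComponentIn (DU Γ univ)ᶜ a), ?_, ?_, mem_insert _ _,
    subset_insert _ _, mem_insert_of_mem _ (mem_connectedComponentIn ha)⟩
  · exact isPreconnected_connectedComponentIn.subset_closure (subset_insert _ _)
      (insert_subset ht subset_closure)
  · refine insert_subset (rho_notMem Γ hw) ?_
    exact (connectedComponentIn_subset _ _).trans (compl_subset_compl.2 (DU_mono Γ (subset_univ _)))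

/-- Everything except the edges from `w` to the complement of `T`. -/
def Kw (w : V) (T : Set V) : Set Pt :=
  (DU Γ {w}ᶜ ∪ {Γ.ρ w}) ∪ ⋃ z ∈ {z | z ∈ T ∧ G.Adj w z}, Γ.arc s(w, z)

lemma Kw_closed (w : V) (T : Set V) : IsClosed (Kw Γ w T) := by
  unfold Kw
  refine ((DU_closed Γ _).union isClosed_singleton).union ?_
  exact (toFinite _).isClosed_biUnion fun z hz => (arc_compact Γ (e := s(w, z)) hz.2).isClosed

lemma mem_Kw_of_edge {w : V} {T : Set V} {e : Sym2 V} (he : e ∈ G.edgeSet)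
    (h : ∀ z, e = s(w, z) → z ∈ T) {x : Pt} (hx : x ∈ Γ.arc e) : x ∈ Kw Γ w T := by
  by_cases hw : w ∈ e
  · obtain ⟨z, rfl⟩ := Sym2.mem_iff_exists.1 hw
    right
    simp only [mem_iUnion]
    exact ⟨z, ⟨h z rfl, he⟩, hx⟩
  · left; left
    exact (mem_DU Γ).2 (Or.inr ⟨e, he, fun v hv hvw => hw (hvw ▸ hv), hx⟩)

lemma mem_Kw_of_vertex (w : V) (T : Set V) (v : V) : Γ.ρ v ∈ Kw Γ w T := by
  left
  by_cases h : v = w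
  · right; rw [h]; rfl
  · left; exact (mem_DU Γ).2 (Or.inl ⟨v, h, rfl⟩)

lemma Kw_sub (w : V) (T : Set V) : DU Γ {y | y ∉ T ∧ G.Adj w y}ᶜ ⊆ Kw Γ w T := by
  intro x hx
  rcases (mem_DU Γ).1 hx with ⟨v, hv, rfl⟩ | ⟨e, he, hS, hx⟩
  · exact mem_Kw_of_vertex Γ w T v
  · refine mem_Kw_of_edge Γ he ?_ hx
    rintro z rfl
    by_contra hz
    exact hS z (by simp) ⟨hz, he⟩

lemma Kw_cover (w : V) (T : Set V) : DU Γ univ ⊆ Kw Γ w T ∪ Kw Γ w Tᶜ := by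
  intro x hx
  rcases (mem_DU Γ).1 hx with ⟨v, hv, rfl⟩ | ⟨e, he, hS, hx⟩
  · exact Or.inl (mem_Kw_of_vertex Γ w T v)
  · by_cases h : ∀ z, e = s(w, z) → z ∈ T
    · exact Or.inl (mem_Kw_of_edge Γ he h hx)
    · push Not at h
      obtain ⟨z, rfl, hz⟩ := h
      refine Or.inr (mem_Kw_of_edge Γ he ?_ hx)
      intro z' hz'
      rw [Sym2.congr_right] at hz'
      exact hz' ▸ hz

lemma Kw_inter (w : V) (T : Set V) : Kw Γ w T ∩ Kw Γ w Tᶜ ⊆ DU Γ {w}ᶜ ∪ {Γ.ρ w} := by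
  rintro x ⟨h1 | h1, h2 | h2⟩
  · exact h1
  · exact h1
  · exact h2
  · simp only [mem_iUnion] at h1 h2
    obtain ⟨z, ⟨hz, hwz⟩, hx⟩ := h1
    obtain ⟨y, ⟨hy, hwy⟩, hx'⟩ := h2
    have hzy : z ≠ y := fun h => hy (h ▸ hz)
    obtain ⟨v, hv, hv', rfl⟩ := Γ.arcs_cross s(w, z) hwz s(w, y) hwy
      (by rw [Ne, Sym2.congr_right]; exact hzy) x ⟨hx, hx'⟩
    by_cases h : v = w
    · right; rw [h]; rfl
    · left; exact (mem_DU Γ).2 (Or.inl ⟨v, h, rfl⟩)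

lemma edge_mid {w y : V} (h : G.Adj w y) {T : Set V} (hy : y ∉ T) :
    ∃ p ∈ DU Γ univ, p ∉ Kw Γ w T ∧ Jn (DU Γ {w}ᶜ) (Γ.ρ w) p := by
  obtain ⟨f, hf, hi, h0, h1, ha⟩ := edge_param Γ h
  have hm : (1/2 : ℝ) ∈ Icc (0:ℝ) 1 := by constructor <;> norm_num
  have hm' : (1/2 : ℝ) ∈ Ico (0:ℝ) 1 := by constructor <;> norm_num
  have hw : w ∉ ({w}ᶜ : Set V) := by simp
  have hmem : f (1/2) ∈ Γ.arc s(w, y) := by rw [ha]; exact ⟨_, hm, rfl⟩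
  have hnv : ∀ v, f (1/2) ≠ Γ.ρ v := by
    intro v hv
    rcases edge_ends Γ h hi h0 h1 ha hm hv with ⟨_, h⟩ | ⟨_, h⟩ <;> norm_num at h
  refine ⟨f (1/2), arc_subset_full Γ (e := s(w, y)) h hmem, ?_,
    f '' Ico 0 1, half_edge_preconn hf, ?_, ⟨0, by simp, h0⟩, ⟨_, hm', rfl⟩⟩
  · rintro ((h2 | h2) | h2)
    · exact half_edge Γ h hi h0 h1 ha hw hm' h2
    · exact hnv w h2
    · simp only [mem_iUnion] at h2
      obtain ⟨z, ⟨hz, hwz⟩, hx⟩ := h2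
      have hzy : z ≠ y := fun h => hy (h ▸ hz)
      obtain ⟨v, hv, hv', hx⟩ := Γ.arcs_cross s(w, z) hwz s(w, y) h
        (by rw [Ne, Sym2.congr_right]; exact hzy) _ ⟨hx, hmem⟩
      exact hnv v hx
  · rintro _ ⟨t, ht, rfl⟩
    exact half_edge Γ h hi h0 h1 ha hw ht

/-- Adjacent, or on a common face. -/
def HH (u v : V) : Prop :=
  u ≠ v ∧ (G.Adj u v ∨ ∃ a ∉ DU Γ univ, Tch Γ a u ∧ Tch Γ a v)

lemma hL_aux {o : Pt} (ho : o ∉ DU Γ univ) (W : Set V) (hO : {x | Tch Γ o x} ⊆ W) (w : V)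
    (hw : w ∈ W) (hB : w ∈ {x | Tch Γ o x} ∨ ∃ z ∈ W, HH Γ w z) (hA : ∃ y ∉ W, HH Γ w y) :
    ∃ x ∈ W, ∃ y ∉ W, x ≠ w ∧ HH Γ w y ∧ HH Γ x y := by
  by_contra hcon
  push Not at hcon
  let P : Pt → Prop := fun a => Jn (DU Γ univ) a o ∨ ∃ z ∈ W, z ≠ w ∧ Tch Γ a z
  have hww : w ∉ ({w}ᶜ : Set V) := by simp
  have hPy : ∀ a, a ∉ DU Γ univ → P a → ∀ y ∉ W, HH Γ w y → ¬ Tch Γ a y := by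
    rintro a ha (h | ⟨z, hz, hzw, hza⟩) y hy hwy hay
    · exact hy (hO (hay.congr Γ h))
    · exact hcon z hz y hy hzw hwy ⟨fun h => hy (h ▸ hz), Or.inr ⟨a, ha, hza, hay⟩⟩
  obtain ⟨p, hp, hpj⟩ : ∃ p, ((p ∈ DU Γ univ ∧ p ∉ Kw Γ w W) ∨ (p ∉ DU Γ univ ∧ ¬ P p)) ∧
      Jn (DU Γ {w}ᶜ) (Γ.ρ w) p := by
    obtain ⟨y, hy, hwy⟩ := hA
    have hwy' := hwy
    obtain ⟨hne, h | ⟨a, ha, haw, hay⟩⟩ := hwy'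
    · obtain ⟨p, h1, h2, h3⟩ := edge_mid Γ h hy
      exact ⟨p, Or.inl ⟨h1, h2⟩, h3⟩
    · obtain ⟨C, h1, h2, h3, -, h4⟩ := face_join Γ hww ha haw
      exact ⟨a, Or.inr ⟨ha, fun hP => hPy a ha hP y hy hwy hay⟩, C, h1, h2, h3, h4⟩
  obtain ⟨q, hq, hqj⟩ : ∃ q, ((q ∈ DU Γ univ ∧ q ∉ Kw Γ w Wᶜ) ∨ (q ∉ DU Γ univ ∧ P q)) ∧
      Jn (DU Γ {w}ᶜ) (Γ.ρ w) q := by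
    rcases hB with hwO | ⟨z, hz, hne, h | ⟨a, ha, haw, haz⟩⟩
    · obtain ⟨C, h1, h2, h3, -, h4⟩ := face_join Γ hww ho hwO
      exact ⟨o, Or.inr ⟨ho, Or.inl (jn_iff.2 ⟨ho, mem_connectedComponentIn ho⟩)⟩,
        C, h1, h2, h3, h4⟩
    · obtain ⟨p, h1, h2, h3⟩ := edge_mid Γ h (T := Wᶜ) (by simpa using hz)
      exact ⟨p, Or.inl ⟨h1, h2⟩, h3⟩
    · obtain ⟨C, h1, h2, h3, -, h4⟩ := face_join Γ hww ha haw
      exact ⟨a, Or.inr ⟨ha, Or.inr ⟨z, hz, hne.symm, haz⟩⟩, C, h1, h2, h3, h4⟩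
  have hpw : p ≠ Γ.ρ w := by
    rintro rfl
    rcases hp with ⟨_, h⟩ | ⟨h, _⟩
    · exact h (mem_Kw_of_vertex Γ w _ w)
    · exact h (rho_mem_full Γ w)
  have hqw : q ≠ Γ.ρ w := by
    rintro rfl
    rcases hq with ⟨_, h⟩ | ⟨h, _⟩
    · exact h (mem_Kw_of_vertex Γ w _ w)
    · exact h (rho_mem_full Γ w)
  have hj : Jn (DU Γ {w}ᶜ ∪ {Γ.ρ w}) p q :=
    janiszewski (DU_compact Γ _) isCompact_singleton (logProp_singleton _)
      (subsingleton_singleton.anti inter_subset_left) hpw hqw (hpj.symm.trans hqj)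
  refine sep (DU_closed Γ univ) (Kw_closed Γ w W) (Kw_closed Γ w Wᶜ) (Kw_cover Γ w W)
    (Kw_inter Γ w W) P ?_ ?_ ?_ hp hq hj
  · rintro a b hab (h | ⟨z, h1, h2, h3⟩)
    · exact Or.inl (hab.symm.trans h)
    · exact Or.inr ⟨z, h1, h2, h3.congr Γ hab⟩
  · intro a p ha hPa hp hj
    refine face_stable Γ (S := {y | y ∉ W ∧ G.Adj w y}) ha ?_ hp (hj.mono (Kw_sub Γ w W))
    rintro y ⟨hy, hwy⟩
    exact hPy a ha hPa y hy ⟨hwy.ne, Or.inl hwy⟩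
  · intro a p ha hPa hp hj
    refine face_stable Γ (S := {y | y ∉ Wᶜ ∧ G.Adj w y}) ha ?_ hp (hj.mono (Kw_sub Γ w Wᶜ))
    rintro y ⟨hy, hwy⟩ hay
    exact hPa (Or.inr ⟨y, not_not.1 hy, hwy.ne.symm, hay⟩)

lemma hC_aux {o : Pt} (ho : o ∉ DU Γ univ) (W : Set V) (hO : {x | Tch Γ o x} ⊆ W)
    (hW : W ≠ univ) : ∃ w ∈ W, ∃ y ∉ W, HH Γ w y := by
  by_contra hcon
  push Not at hcon
  let P : Pt → Prop := fun a => Jn (DU Γ univ) a o ∨ ∃ z ∈ W, Tch Γ a z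
  obtain ⟨y, hy⟩ := (ne_univ_iff_exists_notMem W).1 hW
  refine sep (K0 := ∅) (p := Γ.ρ y) (q := o) (DU_closed Γ univ) (DU_closed Γ W) (DU_closed Γ Wᶜ)
    ?_ ?_ P ?_ ?_ ?_ (Or.inl ⟨rho_mem_full Γ y, rho_notMem Γ hy⟩)
    (Or.inr ⟨ho, Or.inl (jn_iff.2 ⟨ho, mem_connectedComponentIn ho⟩)⟩)
    ⟨univ, isPreconnected_univ, by simp, mem_univ _, mem_univ _⟩
  · intro x hx
    rcases (mem_DU Γ).1 hx with ⟨v, hv, rfl⟩ | ⟨e, he, hS, hx⟩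
    · by_cases hv : v ∈ W
      · exact Or.inl ((mem_DU Γ).2 (Or.inl ⟨v, hv, rfl⟩))
      · exact Or.inr ((mem_DU Γ).2 (Or.inl ⟨v, hv, rfl⟩))
    · by_cases h : ∀ v ∈ e, v ∈ W
      · exact Or.inl ((mem_DU Γ).2 (Or.inr ⟨e, he, h, hx⟩))
      · push Not at h
        obtain ⟨u, hue, hu⟩ := h
        obtain ⟨v, rfl⟩ := Sym2.mem_iff_exists.1 hue
        refine Or.inr ((mem_DU Γ).2 (Or.inr ⟨_, he, ?_, hx⟩))
        have hadj : G.Adj u v := he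
        intro z hz hzW
        rcases Sym2.mem_iff.1 hz with rfl | rfl
        · exact hu hzW
        · exact hcon z hzW u hu ⟨hadj.ne.symm, Or.inl hadj.symm⟩
  · rintro x ⟨h1, h2⟩
    rcases (mem_DU Γ).1 h1 with ⟨v, hv, rfl⟩ | ⟨e, he, hS, hx⟩
    · exact rho_notMem Γ (S := Wᶜ) (by simpa using hv) h2
    · rcases (mem_DU Γ).1 h2 with ⟨v, hv, rfl⟩ | ⟨e', he', hS', hx'⟩
      · exact rho_notMem Γ hv h1
      · have hne : e ≠ e' := by
          rintro rfl
          induction e with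
          | _ u v => exact hS' u (by simp) (hS u (by simp))
        obtain ⟨v, hv, hv', -⟩ := Γ.arcs_cross e he e' he' hne x ⟨hx, hx'⟩
        exact absurd (hS v hv) (hS' v hv')
  · rintro a b hab (h | ⟨z, h1, h3⟩)
    · exact Or.inl (hab.symm.trans h)
    · exact Or.inr ⟨z, h1, h3.congr Γ hab⟩
  · intro a p ha hPa hp hj
    refine face_stable Γ (S := Wᶜ) ha ?_ hp (by rwa [compl_compl])
    intro y hy hay
    rcases hPa with h | ⟨z, hz, hza⟩
    · exact hy (hO (Tch.congr Γ h hay))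
    · exact hcon z hz y hy ⟨fun h => hy (h ▸ hz), Or.inr ⟨a, ha, hza, hay⟩⟩
  · intro a p ha hPa hp hj
    refine face_stable Γ (S := W) ha ?_ hp hj
    intro y hy hay
    exact hPa (Or.inr ⟨y, hy, hay⟩)

lemma E2_aux {o : Pt} (ho : o ∉ DU Γ univ) (D : Set V) (d y : V)
    (hd : Γ.ρ d ∈ closure (connectedComponentIn (DU Γ Dᶜ)ᶜ o)) (h : HH Γ d y) :
    Γ.ρ y ∈ closure (connectedComponentIn (DU Γ (insert d D)ᶜ)ᶜ o) := by
  have hdS : d ∉ (insert d D)ᶜ := by simp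
  have hsub : connectedComponentIn (DU Γ Dᶜ)ᶜ o ⊆
      connectedComponentIn (DU Γ (insert d D)ᶜ)ᶜ o :=
    connectedComponentIn_mono _ (compl_subset_compl.2
      (DU_mono Γ (compl_subset_compl.2 (subset_insert _ _))))
  have hdC : Γ.ρ d ∈ connectedComponentIn (DU Γ (insert d D)ᶜ)ᶜ o :=
    mem_comp_of_mem_closure (DU_closed Γ _) (closure_mono hsub hd) (rho_notMem Γ hdS)
  have heq := connectedComponentIn_eq hdC
  obtain ⟨hne, h | ⟨a, ha, had, hay⟩⟩ := h
  · obtain ⟨f, hf, hi, h0, h1, harc⟩ := edge_param Γ h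
    have hs : f '' Ico 0 1 ⊆ connectedComponentIn (DU Γ (insert d D)ᶜ)ᶜ o := by
      rw [heq]
      refine (half_edge_preconn hf).subset_connectedComponentIn ⟨0, by simp, h0⟩ ?_
      rintro _ ⟨t, ht, rfl⟩
      exact half_edge Γ h hi h0 h1 harc hdS ht
    refine closure_mono hs ?_
    rw [← h1]
    have hc : ContinuousWithinAt f (Ico 0 1) 1 := (hf 1 (by simp)).mono Ico_subset_Icc_self
    exact hc.mem_closure_image (by rw [closure_Ico (by norm_num)]; simp)
  · obtain ⟨C, h1, h2, h3, h4, -⟩ := face_join Γ hdS ha had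
    refine closure_mono ?_ hay
    rw [heq]
    exact h4.trans (h1.subset_connectedComponentIn h3 h2)
end Drawing

theorem exists_outerplane_restriction {V : Type} [Fintype V]
    (G : SimpleGraph V) (n : ℕ) (hn : Fintype.card V = n)
    (Γ : PlanarDrawing G) :
    ∃ V' : Finset V, n ≤ 2 * V'.card ∧
      IsOuterplanePair (drawingUnion Γ (↑V' : Set V) (restrictedEdges G (↑V' : Set V)))
        (Γ.ρ '' (↑V' : Set V)) := by
  classical
  obtain ⟨M, hM, hfar⟩ := jn_far' (DU_compact Γ univ)
  obtain ⟨o, hoM⟩ : ∃ o, o ∉ M := by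
    by_contra hc
    push Not at hc
    exact NormedSpace.unbounded_univ ℝ Pt (hM.isBounded.subset fun x _ => hc x)
  have ho : o ∉ DU Γ univ := (hfar o o hoM hoM).notMem_left
  obtain ⟨D, hD, hall⟩ := algo (HH Γ) {x | Tch Γ o x}
    (fun D => {x | Γ.ρ x ∈ closure (connectedComponentIn (DU Γ Dᶜ)ᶜ o)})
    (fun A B hAB x hx => closure_mono (connectedComponentIn_mono _ (compl_subset_compl.2
      (DU_mono Γ (compl_subset_compl.2 hAB)))) hx)
    (fun x hx => by simpa [Tch] using hx)
    (fun D d y hd h => E2_aux Γ ho D d y hd h)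
    (fun u v h => ⟨h.1.symm, h.2.imp (fun h => h.symm) (fun ⟨a, h1, h2, h3⟩ => ⟨a, h1, h3, h2⟩)⟩)
    (fun W hO w hw h1 h2 => hL_aux Γ ho W hO w hw h1 h2)
    (fun W hO hW => hC_aux Γ ho W hO hW)
  refine ⟨Dᶜ, ?_, ?_⟩
  · rw [Finset.card_compl]; omega
  · rintro U ⟨x, hx, rfl⟩ hU
    rintro _ ⟨v, hv, rfl⟩
    have h1 := hall v
    change Γ.ρ v ∈ closure (connectedComponentIn (DU Γ (↑D)ᶜ)ᶜ o) at h1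
    change Γ.ρ v ∈ closure (connectedComponentIn (DU Γ ↑(Dᶜ))ᶜ x)
    change ¬ IsBounded (connectedComponentIn (DU Γ ↑(Dᶜ))ᶜ x) at hU
    rw [Finset.coe_compl] at hU ⊢
    obtain ⟨b, hb, hbM⟩ : ∃ b ∈ connectedComponentIn (DU Γ (↑D)ᶜ)ᶜ x, b ∉ M := by
      by_contra hc
      push Not at hc
      exact hU (hM.isBounded.subset hc)
    have hj : Jn (DU Γ (↑D)ᶜ) b o := (hfar b o hbM hoM).mono (DU_mono Γ (subset_univ _))
    rw [connectedComponentIn_eq hb, connectedComponentIn_eq (jn_iff.1 hj).2]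
    exact h1
end

section
/- Every planar simple graph G on n vertices contains a subset V' of its vertex set with 2·|V'| ≥ n such that the induced subgraph G[V'] is outerplanar, i.e., G[V'] admits an outerplane planar drawing. -/
open Set Bornology

/-- A planar drawing is outerplane if every vertex point lies in the closure of the
(unique) unbounded connected component of the complement of the drawing set. -/
def IsOuterplaneDrawing {V : Type} [Fintype V] {G : SimpleGraph V}
    (Γ : PlanarDrawing G) : Prop :=
  IsOuterplanePair (Set.range Γ.ρ ∪ ⋃ e ∈ G.edgeSet, Γ.arc e) (Set.range Γ.ρ)

/-! ## Topology of the outer face -/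

theorem isPreconnected_ext (R : ℝ) : IsPreconnected ((Metric.closedBall (0 : Pt) R)ᶜ) := by
  rcases lt_or_ge R 0 with h | hR
  · rw [Metric.closedBall_eq_empty.2 h, compl_empty]
    exact isPreconnected_univ
  have h1 : IsPreconnected {p : Pt | R < p.1} :=
    ((convex_Ioi R).linear_preimage (LinearMap.fst ℝ ℝ ℝ)).isPreconnected
  have h2 : IsPreconnected {p : Pt | R < p.2} :=
    ((convex_Ioi R).linear_preimage (LinearMap.snd ℝ ℝ ℝ)).isPreconnected
  have h3 : IsPreconnected {p : Pt | p.1 < -R} :=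
    ((convex_Iio (-R)).linear_preimage (LinearMap.fst ℝ ℝ ℝ)).isPreconnected
  have h4 : IsPreconnected {p : Pt | p.2 < -R} :=
    ((convex_Iio (-R)).linear_preimage (LinearMap.snd ℝ ℝ ℝ)).isPreconnected
  have e : (Metric.closedBall (0 : Pt) R)ᶜ =
      (({p : Pt | R < p.1} ∪ {p : Pt | R < p.2}) ∪ {p : Pt | p.1 < -R}) ∪
        {p : Pt | p.2 < -R} := by
    ext p
    simp only [mem_compl_iff, Metric.mem_closedBall, dist_zero_right, Prod.norm_def,
      Real.norm_eq_abs, not_le, mem_union, mem_ofPred_eq, lt_sup_iff, lt_abs]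
    grind
  rw [e]
  refine IsPreconnected.union (R + 1, -R - 1) ?_ ?_
    (IsPreconnected.union (-R - 1, R + 1) ?_ ?_
      (IsPreconnected.union (R + 1, R + 1) ?_ ?_ h1 h2) h3) h4 <;> simp

/-- A point is accessible from infinity. -/
def InfAcc (D : Set Pt) (p : Pt) : Prop :=
  ∃ S : Set Pt, IsPreconnected S ∧ S ⊆ Dᶜ ∧ ¬ IsBounded S ∧ p ∈ closure S

theorem exists_mem_compl_of_not_isBounded {S : Set Pt} (h : ¬ IsBounded S) (R : ℝ) :
    ∃ x ∈ S, x ∉ Metric.closedBall (0 : Pt) R := by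
  by_contra! hc
  exact h (Metric.isBounded_closedBall.subset hc)

theorem outer_of_acc {D P : Set Pt} (hD : IsBounded D) (h : ∀ p ∈ P, InfAcc D p) :
    IsOuterplanePair D P := by
  rintro U ⟨x, hx, rfl⟩ hU p hp
  obtain ⟨S, hS, hSD, hSu, hpS⟩ := h p hp
  obtain ⟨R, hR⟩ := hD.subset_closedBall (0 : Pt)
  obtain ⟨s, hs, hsR⟩ := exists_mem_compl_of_not_isBounded hSu R
  obtain ⟨u, hu, huR⟩ := exists_mem_compl_of_not_isBounded hU R
  have hext : (Metric.closedBall (0 : Pt) R)ᶜ ⊆ Dᶜ := compl_subset_compl.2 hR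
  have h1 : IsPreconnected (connectedComponentIn Dᶜ x ∪ (Metric.closedBall (0 : Pt) R)ᶜ ∪ S) :=
    IsPreconnected.union s (Or.inr hsR) hs
      (IsPreconnected.union u hu huR isPreconnected_connectedComponentIn (isPreconnected_ext R)) hS
  have h2 := h1.subset_connectedComponentIn (x := x) (F := Dᶜ)
    (Or.inl (Or.inl (mem_connectedComponentIn hx)))
    (union_subset (union_subset (connectedComponentIn_subset _ _) hext) hSD)
  exact closure_mono (subset_union_right.trans h2) hpS

/-! ## The strip map -/

noncomputable def strip (k : ℕ) (p : Pt) : Pt := (2 * k + p.1 / (1 + |p.1|), p.2)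

theorem abs_squash (x : ℝ) : |x / (1 + |x|)| = 1 - 1 / (1 + |x|) := by
  have : 0 < 1 + |x| := by positivity
  rw [abs_div, abs_of_pos this]
  field_simp
  ring

theorem strip_mem (k : ℕ) (p : Pt) : |(strip k p).1 - 2 * k| < 1 := by
  have : 0 < 1 / (1 + |p.1|) := by positivity
  simp only [strip, add_sub_cancel_left, abs_squash]
  linarith

theorem strip_continuous (k : ℕ) : Continuous (strip k) := by
  unfold strip
  have : ∀ p : Pt, 1 + |p.1| ≠ 0 := fun p => by positivity
  fun_prop (disch := assumption)

theorem squash_inj {x y : ℝ} (h : x / (1 + |x|) = y / (1 + |y|)) : x = y := by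
  have h1 := congrArg abs h
  rw [abs_squash, abs_squash] at h1
  have hx : 0 < 1 + |x| := by positivity
  have hy : 0 < 1 + |y| := by positivity
  have h2 : 1 + |x| = 1 + |y| := by
    have : 1 / (1 + |x|) = 1 / (1 + |y|) := by linarith
    simpa using this
  rw [h2] at h
  exact (div_left_inj' hy.ne').1 h

theorem strip_injective (k : ℕ) : Function.Injective (strip k) := by
  intro p q h
  simp only [strip, Prod.mk.injEq, add_right_inj] at h
  exact Prod.ext (squash_inj h.1) h.2

theorem strip_disj {k l : ℕ} {p q : Pt} (h : strip k p = strip l q) : k = l := by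
  have h1 := abs_lt.1 (strip_mem k p)
  have h2 := abs_lt.1 (strip_mem l q)
  rw [h] at h1
  have a : (k : ℝ) < l + 1 := by linarith
  have b : (l : ℝ) < k + 1 := by linarith
  have a' : k < l + 1 := by exact_mod_cast a
  have b' : l < k + 1 := by exact_mod_cast b
  omega

/-- The lines separating the strips. -/
def walls : Set Pt := {p | ∃ n : ℤ, p.1 = 2 * n + 1}

theorem strip_not_walls (k : ℕ) (p : Pt) : strip k p ∉ walls := by
  rintro ⟨n, hn⟩
  have h1 := abs_lt.1 (strip_mem k p)
  rw [hn] at h1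
  have a : ((n : ℤ) : ℝ) < ((k : ℤ) : ℝ) := by push_cast; linarith
  have b : ((k : ℤ) : ℝ) < ((n + 1 : ℤ) : ℝ) := by push_cast; linarith
  have a' : n < (k : ℤ) := by exact_mod_cast a
  have b' : (k : ℤ) < n + 1 := by exact_mod_cast b
  omega

theorem strip_acc (k : ℕ) {S : Set Pt} (hS : IsPreconnected S) (hu : ¬ IsBounded S) :
    ∃ S' : Set Pt, IsPreconnected S' ∧ ¬ IsBounded S' ∧ strip k '' S ⊆ S' ∧
      S' ⊆ strip k '' S ∪ walls := by
  have hc : IsPreconnected (strip k '' S) := hS.image _ (strip_continuous k).continuousOn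
  by_cases hb : IsBounded (strip k '' S)
  swap
  · exact ⟨_, hc, hb, Subset.rfl, subset_union_left⟩
  obtain ⟨M, hM⟩ := hb.subset_closedBall (0 : Pt)
  -- points of `S` with large first coordinate
  have hseq : ∀ n : ℕ, ∃ p ∈ S, (n : ℝ) < |p.1| := by
    intro n
    obtain ⟨p, hp, hpn⟩ := exists_mem_compl_of_not_isBounded hu (max n M)
    refine ⟨p, hp, ?_⟩
    have h1 := hM (mem_image_of_mem _ hp)
    simp only [Metric.mem_closedBall, dist_zero_right, Prod.norm_def, Real.norm_eq_abs] at h1 hpn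
    rw [not_le, lt_sup_iff] at hpn
    rw [sup_le_iff] at h1
    rcases hpn with h | h
    · exact (le_max_left _ _).trans_lt h
    · exact absurd ((le_max_right _ _).trans_lt h) (not_lt.2 h1.2)
  choose p hpS hpn using hseq
  obtain ⟨q, -, φ, hφ, hlim⟩ := (isCompact_closedBall (0 : Pt) M).tendsto_subseq
    (x := fun n => strip k (p n)) (fun n => hM (mem_image_of_mem _ (hpS n)))
  have hq : q ∈ closure (strip k '' S) :=
    mem_closure_of_tendsto hlim (Filter.Eventually.of_forall fun n => mem_image_of_mem _ (hpS _))
  have hq1 : |q.1 - 2 * k| = 1 := by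
    have l1 : Filter.Tendsto (fun n => |(strip k (p (φ n))).1 - 2 * k|) Filter.atTop
        (nhds |q.1 - 2 * k|) :=
      ((((continuous_fst.tendsto q).comp hlim).sub_const _).abs)
    have l2 : Filter.Tendsto (fun n => |(strip k (p (φ n))).1 - 2 * k|) Filter.atTop
        (nhds 1) := by
      have l3 : Filter.Tendsto (fun n : ℕ => (1 : ℝ) - 1 / ((n : ℝ) + 1)) Filter.atTop (nhds 1) := by
        simpa using tendsto_one_div_add_atTop_nhds_zero_nat.const_sub (1 : ℝ)
      refine tendsto_of_tendsto_of_tendsto_of_le_of_le l3 tendsto_const_nhds ?_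
        (fun n => (strip_mem k _).le)
      intro n
      have h1 : (n : ℝ) ≤ φ n := by exact_mod_cast hφ.id_le n
      have h2 := hpn (φ n)
      simp only [strip, add_sub_cancel_left, abs_squash]
      have h3 : 1 / (1 + |(p (φ n)).1|) ≤ 1 / ((n : ℝ) + 1) :=
        one_div_le_one_div_of_le (by positivity) (by linarith)
      linarith
    exact tendsto_nhds_unique l1 l2
  have hL : IsPreconnected {x : Pt | x.1 = q.1} :=
    ((convex_singleton q.1).linear_preimage (LinearMap.fst ℝ ℝ ℝ)).isPreconnected
  have hLw : {x : Pt | x.1 = q.1} ⊆ walls := by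
    rintro x (hx : x.1 = q.1)
    rcases (abs_eq zero_le_one).1 hq1 with h | h
    · exact ⟨k, by push_cast; linarith⟩
    · exact ⟨k - 1, by push_cast; linarith⟩
  have hq' : IsPreconnected (insert q (strip k '' S)) :=
    hc.subset_closure (subset_insert _ _) (insert_subset hq subset_closure)
  refine ⟨insert q (strip k '' S) ∪ {x : Pt | x.1 = q.1},
    IsPreconnected.union q (mem_insert _ _) rfl hq' hL, ?_,
    (subset_insert _ _).trans subset_union_left, ?_⟩
  · intro hb
    obtain ⟨R, hR⟩ := hb.subset_closedBall (0 : Pt)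
    have := hR (Or.inr (show ((q.1, |R| + 1) : Pt).1 = q.1 from rfl))
    simp only [Metric.mem_closedBall, dist_zero_right, Prod.norm_def, Real.norm_eq_abs,
      sup_le_iff] at this
    have h2 := (le_abs_self _).trans this.2
    linarith [le_abs_self R]
  · refine union_subset (insert_subset (Or.inr (hLw rfl)) subset_union_left)
      (hLw.trans subset_union_right)

/-! ## Inversion -/

noncomputable def invn (r p : Pt) : Pt :=
  Complex.equivRealProdCLM (Complex.equivRealProdCLM.symm (p - r))⁻¹

theorem invn_injective (r : Pt) : Function.Injective (invn r) := by
  intro p q h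
  have h1 := inv_injective (Complex.equivRealProdCLM.injective h)
  exact sub_left_injective (Complex.equivRealProdCLM.symm.injective h1)

theorem invn_continuousOn (r : Pt) : ContinuousOn (invn r) {r}ᶜ := by
  refine Complex.equivRealProdCLM.continuous.comp_continuousOn (ContinuousOn.inv₀ ?_ ?_)
  · fun_prop
  · intro p hp h
    exact hp (sub_eq_zero.1 ((map_eq_zero_iff _ Complex.equivRealProdCLM.symm.injective).1 h))

theorem invn_unbounded {r : Pt} {S : Set Pt} (hr : r ∉ S) (hS : r ∈ closure S) :
    ¬ IsBounded (invn r '' S) := by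
  intro hb
  have hb2 : IsBounded (Complex.equivRealProdCLM.symm '' (invn r '' S)) :=
    Complex.equivRealProdCLM.symm.lipschitz.isBounded_image hb
  obtain ⟨M, hM⟩ := hb2.subset_closedBall 0
  have h1 : ∀ p ∈ S, 1 ≤ M * ‖Complex.equivRealProdCLM.symm (p - r)‖ := by
    intro p hp
    have h2 := hM (mem_image_of_mem _ (mem_image_of_mem _ hp))
    have h3 : Complex.equivRealProdCLM.symm (p - r) ≠ 0 := fun h => by
      have := sub_eq_zero.1 ((map_eq_zero_iff _ Complex.equivRealProdCLM.symm.injective).1 h)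
      exact hr (this ▸ hp)
    rw [invn, ContinuousLinearEquiv.symm_apply_apply, mem_closedBall_zero_iff, norm_inv] at h2
    exact (inv_le_iff_one_le_mul₀ (norm_pos_iff.2 h3)).1 h2
  have hcl : IsClosed {p : Pt | 1 ≤ M * ‖Complex.equivRealProdCLM.symm (p - r)‖} :=
    isClosed_le continuous_const (by fun_prop)
  have h5 : 1 ≤ M * ‖Complex.equivRealProdCLM.symm (r - r)‖ := closure_minimal h1 hcl hS
  simp only [sub_self, map_zero, norm_zero, mul_zero] at h5
  linarith

/-! ## Access paths along the search tree -/

theorem exists_access {V : Type} [Fintype V] {G : SimpleGraph V} (Γ : PlanarDrawing G)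
    (root : V → V) (δ : V → ℕ) (hroot : ∀ a b, G.Adj a b → root a = root b)
    (h0 : ∀ v, δ v = 0 → root v = v) (hroot0 : ∀ v, δ (root v) = 0)
    (hpred : ∀ d v, δ v = d + 1 → ∃ a, G.Adj a v ∧ δ a = d) (d : ℕ) :
    ∀ u, δ u = d + 1 → ∃ S : Set Pt, IsPreconnected S ∧ Γ.ρ u ∈ closure S ∧
      Γ.ρ (root u) ∈ closure S ∧ Γ.ρ (root u) ∉ S ∧
      ∀ x ∈ S, (∃ a b, G.Adj a b ∧ δ a < d + 1 ∧ x ∈ Γ.arc s(a, b)) ∧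
        ∀ w, d + 1 ≤ δ w → x ≠ Γ.ρ w := by
  induction d with
  | zero =>
    intro u hu
    obtain ⟨v, hvu, hv⟩ := hpred _ u hu
    obtain ⟨f, hf, hfi, hf0, hf1, hA⟩ := Γ.arc_isArc v u hvu
    have hnv : ∀ t ∈ Ioo (0 : ℝ) 1, ∀ w, f t ≠ Γ.ρ w := by
      intro t ht w he
      have h1 : Γ.ρ w ∈ Γ.arc s(v, u) := by
        rw [hA, ← he]; exact mem_image_of_mem _ (Ioo_subset_Icc_self ht)
      rcases Sym2.mem_iff.1 (Γ.vertex_mem _ hvu w h1) with rfl | rfl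
      · have := hfi (Ioo_subset_Icc_self ht) (left_mem_Icc.2 zero_le_one) (he.trans hf0.symm)
        exact ht.1.ne' this
      · have := hfi (Ioo_subset_Icc_self ht) (right_mem_Icc.2 zero_le_one) (he.trans hf1.symm)
        exact ht.2.ne this
    have hcl : f '' Icc 0 1 ⊆ closure (f '' Ioo 0 1) := by
      have := ContinuousOn.image_closure (s := Ioo (0 : ℝ) 1) (f := f)
        (by rwa [closure_Ioo zero_ne_one])
      rwa [closure_Ioo zero_ne_one] at this
    have hr : root u = v := by rw [← hroot _ _ hvu, h0 v hv]
    refine ⟨f '' Ioo 0 1, isPreconnected_Ioo.image _ (hf.mono Ioo_subset_Icc_self), ?_, ?_, ?_, ?_⟩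
    · rw [← hf1]; exact hcl (mem_image_of_mem _ (right_mem_Icc.2 zero_le_one))
    · rw [hr, ← hf0]; exact hcl (mem_image_of_mem _ (left_mem_Icc.2 zero_le_one))
    · rintro ⟨t, ht, he⟩
      exact hnv t ht _ he
    · rintro _ ⟨t, ht, rfl⟩
      refine ⟨⟨v, u, hvu, by omega, ?_⟩, fun w _ => hnv t ht w⟩
      rw [hA]; exact mem_image_of_mem _ (Ioo_subset_Icc_self ht)
  | succ d ih =>
    intro u hu
    obtain ⟨v, hvu, hv⟩ := hpred _ u hu
    obtain ⟨S, hS, hSv, hSr, hSr', hSx⟩ := ih v hv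
    obtain ⟨f, hf, hfi, hf0, hf1, hA⟩ := Γ.arc_isArc v u hvu
    have hnv : ∀ t ∈ Ico (0 : ℝ) 1, ∀ w, f t = Γ.ρ w → w = v := by
      intro t ht w he
      have h1 : Γ.ρ w ∈ Γ.arc s(v, u) := by
        rw [hA, ← he]; exact mem_image_of_mem _ (Ico_subset_Icc_self ht)
      rcases Sym2.mem_iff.1 (Γ.vertex_mem _ hvu w h1) with rfl | rfl
      · rfl
      · have := hfi (Ico_subset_Icc_self ht) (right_mem_Icc.2 zero_le_one) (he.trans hf1.symm)
        exact absurd this ht.2.ne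
    have hcl : f '' Icc 0 1 ⊆ closure (f '' Ico 0 1) := by
      have := ContinuousOn.image_closure (s := Ico (0 : ℝ) 1) (f := f)
        (by rwa [closure_Ico zero_ne_one])
      rwa [closure_Ico zero_ne_one] at this
    have hr : root u = root v := (hroot _ _ hvu).symm
    have hv0 : Γ.ρ v ∈ f '' Ico 0 1 := ⟨0, left_mem_Ico.2 zero_lt_one, hf0⟩
    have hins : IsPreconnected (insert (Γ.ρ v) S) :=
      hS.subset_closure (subset_insert _ _) (insert_subset hSv subset_closure)
    refine ⟨insert (Γ.ρ v) S ∪ f '' Ico 0 1, IsPreconnected.union (Γ.ρ v) (mem_insert _ _) hv0 hins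
      (isPreconnected_Ico.image _ (hf.mono Ico_subset_Icc_self)), ?_, ?_, ?_, ?_⟩
    · rw [← hf1]
      exact closure_mono subset_union_right
        (hcl (mem_image_of_mem _ (right_mem_Icc.2 zero_le_one)))
    · rw [hr]
      exact closure_mono ((subset_insert _ _).trans subset_union_left) hSr
    · rw [hr]
      have hne : root v ≠ v := fun h => by
        have := hroot0 v
        rw [h] at this; omega
      rintro ((h | h) | ⟨t, ht, he⟩)
      · exact hne (Γ.inj h)
      · exact hSr' h
      · exact hne (hnv t ht _ he)
    · have key : ∀ x ∈ f '' Ico 0 1, (∃ a b, G.Adj a b ∧ δ a < d + 1 + 1 ∧ x ∈ Γ.arc s(a, b)) ∧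
          ∀ w, d + 1 + 1 ≤ δ w → x ≠ Γ.ρ w := by
        rintro _ ⟨t, ht, rfl⟩
        refine ⟨⟨v, u, hvu, by omega, ?_⟩, fun w hw he => ?_⟩
        · rw [hA]; exact mem_image_of_mem _ (Ico_subset_Icc_self ht)
        · have := hnv t ht w he
          subst this
          omega
      rintro x ((rfl | h) | h)
      · exact key _ hv0
      · obtain ⟨⟨a, b, hab, ha, hx⟩, h2⟩ := hSx x h
        exact ⟨⟨a, b, hab, by omega, hx⟩, fun w hw => h2 w (by omega)⟩
      · exact key _ h

/-! ## Redrawing the classes -/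

theorem exists_redraw {V : Type} [Fintype V] {G : SimpleGraph V} (Γ : PlanarDrawing G)
    (V' : Finset V) (κ : V → ℕ) (Φ : V → Pt → Pt)
    (hinj : ∀ v w x y, Φ v x = Φ w y → κ v = κ w ∧ x = y)
    (hκ : ∀ v w, κ v = κ w → Φ v = Φ w)
    (hadj : ∀ v ∈ V', ∀ w ∈ V', G.Adj v w → κ v = κ w)
    (hcont : ∀ v ∈ V', ∀ w ∈ V', G.Adj v w → ContinuousOn (Φ v) (Γ.arc s(v, w))) :
    ∃ Γ' : PlanarDrawing (G.induce (↑V' : Set V)),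
      (∀ v, Γ'.ρ v = Φ v (Γ.ρ v)) ∧
      ∀ u v : (↑V' : Set V), G.Adj u v → Γ'.arc s(u, v) = Φ u '' Γ.arc s(u.1, v.1) := by
  have hadj' : ∀ u v : (↑V' : Set V), (G.induce (↑V' : Set V)).Adj u v → Φ u = Φ v :=
    fun u v h => hκ _ _ (hadj u u.2 v v.2 h)
  have hedge : ∀ e ∈ (G.induce (↑V' : Set V)).edgeSet, ∀ v ∈ e, ∀ w ∈ e, Φ v.1 = Φ w.1 := by
    intro e
    induction e with | _ a b =>
    intro he v hv w hw
    have h1 := hadj' a b he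
    rcases Sym2.mem_iff.1 hv with rfl | rfl <;> rcases Sym2.mem_iff.1 hw with rfl | rfl
    · rfl
    · exact h1
    · exact h1.symm
    · rfl
  have hmap : ∀ e ∈ (G.induce (↑V' : Set V)).edgeSet, e.map Subtype.val ∈ G.edgeSet := by
    intro e
    induction e with | _ a b =>
    intro he
    exact he
  have harc : ∀ u v : (↑V' : Set V), G.Adj u v →
      {y | ∃ w ∈ s(u, v), y ∈ Φ w.1 '' Γ.arc (s(u, v).map Subtype.val)} =
        Φ u '' Γ.arc s(u.1, v.1) := by
    intro u v h
    ext y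
    constructor
    · rintro ⟨w, hw, hy⟩
      rw [hedge s(u, v) h w hw u (Sym2.mem_mk_left _ _)] at hy
      exact hy
    · intro hy
      exact ⟨u, Sym2.mem_mk_left _ _, hy⟩
  refine ⟨⟨fun v => Φ v (Γ.ρ v), ?_, fun e => {y | ∃ v ∈ e, y ∈ Φ v.1 '' Γ.arc (e.map Subtype.val)},
    ?_, ?_, ?_⟩, fun _ => rfl, harc⟩
  · intro v w h
    exact Subtype.ext (Γ.inj (hinj _ _ _ _ h).2)
  · intro u v h
    rw [harc u v h]
    obtain ⟨f, hf, hfi, hf0, hf1, hA⟩ := Γ.arc_isArc u.1 v.1 h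
    refine ⟨Φ u ∘ f, ?_, ?_, ?_, ?_, ?_⟩
    · exact (hcont u u.2 v v.2 h).comp hf (by rw [hA]; exact mapsTo_image _ _)
    · intro s hs t ht hst
      exact hfi hs ht (hinj _ _ _ _ hst).2
    · simp [hf0]
    · simp only [Function.comp, hf1]
      rw [hadj' u v h]
    · rw [hA, image_comp]
  · rintro e he w ⟨v, hv, z, hz, hzw⟩
    have h1 := (hinj _ _ _ _ hzw).2
    subst h1
    have h2 := Γ.vertex_mem _ (hmap e he) _ hz
    obtain ⟨w', hw', h3⟩ := Sym2.mem_map.1 h2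
    rwa [← Subtype.ext h3]
  · rintro e he e' he' hne y ⟨⟨v, hv, z, hz, rfl⟩, ⟨v', hv', z', hz', h⟩⟩
    have h1 := (hinj _ _ _ _ h).2
    subst h1
    obtain ⟨w, hw, hw', hzw⟩ := Γ.arcs_cross _ (hmap e he) _ (hmap e' he')
      (fun h => hne (Sym2.map.injective Subtype.val_injective h)) z' ⟨hz, hz'⟩
    obtain ⟨a, ha, rfl⟩ := Sym2.mem_map.1 hw
    obtain ⟨b, hb, hba⟩ := Sym2.mem_map.1 hw'
    have hba' : b = a := Subtype.ext hba
    subst hba'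
    refine ⟨b, ha, hb, ?_⟩
    rw [hzw, hedge e he v hv b ha]

theorem drawing_bounded {V : Type} [Fintype V] {G : SimpleGraph V} (Γ : PlanarDrawing G) :
    IsBounded (Set.range Γ.ρ ∪ ⋃ e ∈ G.edgeSet, Γ.arc e) := by
  refine (finite_range _).isBounded.union ((isBounded_biUnion (Set.toFinite _)).2 ?_)
  intro e
  induction e with | _ a b =>
  intro he
  obtain ⟨f, hf, -, -, -, hA⟩ := Γ.arc_isArc a b he
  rw [hA]
  exact (isCompact_Icc.image_of_continuousOn hf).isBounded

theorem walk_step {V : Type} {G : SimpleGraph V} {u w : V} {d : ℕ} (p : G.Walk u w)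
    (hp : p.length = d + 1) : ∃ a, G.Adj u a ∧ ∃ q : G.Walk a w, q.length = d := by
  cases p with
  | nil => simp at hp
  | cons h q => exact ⟨_, h, q, by simpa using hp⟩

/-- Breadth first search layers. -/
theorem exists_layers {V : Type} (G : SimpleGraph V) :
    ∃ (root : V → V) (δ : V → ℕ), (∀ a b, G.Adj a b → root a = root b) ∧
      (∀ v, δ v = 0 → root v = v) ∧ (∀ v, δ (root v) = 0) ∧
      (∀ d v, δ v = d + 1 → ∃ a, G.Adj a v ∧ δ a = d) ∧
      (∀ a b, G.Adj a b → δ a ≤ δ b + 1) := by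
  let root : V → V := fun v => (G.connectedComponentMk v).out
  have hreach : ∀ v, G.Reachable (root v) v := fun v =>
    SimpleGraph.ConnectedComponent.exact (Quot.out_eq (G.connectedComponentMk v))
  have hroot : ∀ a b, G.Reachable a b → root a = root b := fun a b h => by
    have : G.connectedComponentMk a = G.connectedComponentMk b :=
      SimpleGraph.ConnectedComponent.sound h
    simp only [root, this]
  have htri : ∀ a b, G.Adj a b → G.dist (root b) b ≤ G.dist (root a) a + 1 := by
    intro a b h
    obtain ⟨p, hp⟩ := (hreach a).exists_walk_length_eq_dist
    rw [← hroot a b h.reachable, ← hp]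
    simpa using SimpleGraph.dist_le (p.concat h)
  refine ⟨root, fun v => G.dist (root v) v, fun a b h => hroot a b h.reachable, ?_, ?_, ?_,
    fun a b h => htri b a h.symm⟩
  · intro v h
    exact (hreach v).dist_eq_zero_iff.1 h
  · intro v
    simp only [hroot _ _ (hreach v), SimpleGraph.dist_self]
  · intro d v h
    obtain ⟨p, hp⟩ := (hreach v).symm.exists_walk_length_eq_dist
    simp only at h
    rw [SimpleGraph.dist_comm, h] at hp
    obtain ⟨a, hva, q, hp⟩ := walk_step p hp
    refine ⟨a, hva.symm, ?_⟩
    have h1 := htri a v hva.symm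
    have h2 := SimpleGraph.dist_le q
    have h3 := hroot _ _ hva.reachable
    rw [hp, h3, SimpleGraph.dist_comm] at h2
    simp only
    omega

theorem outerplanar_of_parity {V : Type} [Fintype V] {G : SimpleGraph V} (Γ : PlanarDrawing G)
    (root : V → V) (δ : V → ℕ) (hroot : ∀ a b, G.Adj a b → root a = root b)
    (h0 : ∀ v, δ v = 0 → root v = v) (hroot0 : ∀ v, δ (root v) = 0)
    (hpred : ∀ d v, δ v = d + 1 → ∃ a, G.Adj a v ∧ δ a = d)
    (V' : Finset V) (hV' : ∀ a ∈ V', ∀ b ∈ V', G.Adj a b → δ a = δ b) :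
    ∃ Γ' : PlanarDrawing (G.induce (↑V' : Set V)), IsOuterplaneDrawing Γ' := by
  obtain ⟨enc, henc⟩ := exists_injective_nat (V × ℕ)
  let κ : V → ℕ := fun v => enc (root v, δ v)
  have hκ : ∀ v w, κ v = κ w → root v = root w ∧ δ v = δ w := by
    intro v w h
    have := henc h
    simpa using this
  let Φ : V → Pt → Pt := fun v p => strip (κ v) (invn (Γ.ρ (root v)) p)
  have hinj : ∀ v w x y, Φ v x = Φ w y → κ v = κ w ∧ x = y := by
    intro v w x y h
    have h1 : κ v = κ w := strip_disj h
    refine ⟨h1, ?_⟩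
    simp only [Φ, h1, (hκ v w h1).1] at h
    exact invn_injective _ (strip_injective _ h)
  -- layer zero has no edges inside a class
  have hno : ∀ a b, G.Adj a b → δ a = δ b → δ a ≠ 0 := by
    intro a b hab he ha
    have h1 := hroot a b hab
    rw [h0 a ha, h0 b (by omega)] at h1
    exact hab.ne h1
  have hout : ∀ v, δ v ≠ 0 → Γ.ρ v ≠ Γ.ρ (root v) := by
    intro v hv h
    have h1 := hroot0 v
    rw [← Γ.inj h] at h1
    exact hv h1
  obtain ⟨Γ', hρ, harc⟩ := exists_redraw Γ V' κ Φ hinj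
    (fun v w h => by simp only [Φ, h, (hκ v w h).1])
    (fun v hv w hw h => by simp only [κ, hroot v w h, hV' v hv w hw h])
    (fun v hv w hw h => by
      refine (strip_continuous _).comp_continuousOn ((invn_continuousOn _).mono ?_)
      rintro x hx (rfl : x = _)
      have he := hV' v hv w hw h
      have hn := hno v w h he
      rcases Sym2.mem_iff.1 (Γ.vertex_mem _ h _ hx) with h1 | h1
      · exact hout v hn (by rw [h1])
      · exact hout w (he ▸ hn) (by rw [← hroot v w h, h1]))
  refine ⟨Γ', outer_of_acc (drawing_bounded Γ') ?_⟩
  -- description of the points of the drawing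
  have hD : ∀ x ∈ Set.range Γ'.ρ ∪ ⋃ e ∈ (G.induce (↑V' : Set V)).edgeSet, Γ'.arc e,
      ∃ w z, x = Φ w z ∧ (z = Γ.ρ w ∨
        ∃ b, G.Adj w b ∧ δ b = δ w ∧ z ∈ Γ.arc s(w, b)) := by
    rintro x (⟨w, rfl⟩ | hx)
    · exact ⟨w, _, hρ w, Or.inl rfl⟩
    · simp only [mem_iUnion] at hx
      obtain ⟨e, he, hx⟩ := hx
      induction e with | _ a b =>
      rw [harc a b he] at hx
      obtain ⟨z, hz, rfl⟩ := hx
      exact ⟨a, z, rfl, Or.inr ⟨b, he, (hV' a a.2 b b.2 he).symm, hz⟩⟩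
  rintro _ ⟨u, rfl⟩
  rw [hρ u]
  generalize (u : V) = u
  rcases hd : δ u with _ | d
  · -- a root: use a vertical ray
    refine ⟨strip (κ u) '' ((fun t : ℝ => ((0, t) : Pt)) '' Ioi 0), ?_, ?_, ?_, ?_⟩
    · exact (isPreconnected_Ioi.image _ (by fun_prop)).image _ (strip_continuous _).continuousOn
    · rintro _ ⟨_, ⟨t, ht, rfl⟩, rfl⟩ hx
      obtain ⟨w, z, hxz, h⟩ := hD _ hx
      have hk : κ u = κ w := strip_disj hxz
      obtain ⟨hk1, hk2⟩ := hκ _ _ hk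
      rcases h with rfl | ⟨b, hwb, hb, -⟩
      · have h2 := h0 w (by omega)
        simp only [Φ, h2, hk] at hxz
        have h3 := congrArg Prod.snd (strip_injective _ hxz)
        simp [invn] at h3
        exact (ne_of_gt ht) h3
      · exact hno w b hwb hb.symm (by omega)
    · intro hb
      obtain ⟨R, hR⟩ := hb.subset_closedBall (0 : Pt)
      have := hR (mem_image_of_mem _ (mem_image_of_mem _
        (show |R| + 1 ∈ Ioi (0 : ℝ) from by have := abs_nonneg R; exact mem_Ioi.2 (by linarith))))
      simp only [Metric.mem_closedBall, dist_zero_right, Prod.norm_def, Real.norm_eq_abs,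
        strip] at this
      have h2 := (le_abs_self _).trans ((le_max_right _ _).trans this)
      linarith [le_abs_self R]
    · have h2 := h0 u hd
      have h3 : invn (Γ.ρ (root u)) (Γ.ρ u) = (0, 0) := by rw [h2]; simp [invn]
      have h4 : (0 : ℝ) ∈ closure (Ioi (0 : ℝ)) := by rw [closure_Ioi]; exact mem_Ici.2 le_rfl
      simp only [Φ, h3]
      rw [← image_comp]
      have hc : Continuous (strip (κ u) ∘ fun t : ℝ => ((0, t) : Pt)) :=
        (strip_continuous _).comp (by fun_prop)
      exact image_closure_subset_closure_image hc (mem_image_of_mem _ h4)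
  · obtain ⟨S, hS, hSu, hSr, hSr', hSx⟩ := exists_access Γ root δ hroot h0 hroot0 hpred d u hd
    have hS1 : S ⊆ {Γ.ρ (root u)}ᶜ := by
      rintro x hx (rfl : x = _)
      exact hSr' hx
    obtain ⟨T, hT, hTu, hT1, hT2⟩ := strip_acc (κ u)
      (hS.image _ ((invn_continuousOn (Γ.ρ (root u))).mono hS1)) (invn_unbounded hSr' hSr)
    refine ⟨T, hT, ?_, hTu, closure_mono hT1 ?_⟩
    · intro x hx hxD
      obtain ⟨w, z, rfl, h⟩ := hD _ hxD
      rcases hT2 hx with ⟨_, ⟨s, hs, rfl⟩, he⟩ | hw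
      · obtain ⟨hk, hsz⟩ := hinj u w s z he
        subst hsz
        obtain ⟨hk1, hk2⟩ := hκ _ _ hk
        obtain ⟨⟨a, b, hab, ha, hsab⟩, hv⟩ := hSx s hs
        rcases h with h | ⟨c, hwc, hc, hz⟩
        · exact hv w (by omega) h
        · obtain ⟨y, -, hy, hsy⟩ := Γ.arcs_cross s(a, b) hab s(w, c) hwc (fun h => by
            have h1 : a ∈ s(w, c) := h ▸ Sym2.mem_mk_left _ _
            rcases Sym2.mem_iff.1 h1 with rfl | rfl <;> omega) s ⟨hsab, hz⟩
          refine hv y ?_ hsy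
          rcases Sym2.mem_iff.1 hy with rfl | rfl <;> omega
      · exact strip_not_walls _ _ hw
    · rw [← image_comp]
      have hc : ContinuousAt (strip (κ u) ∘ invn (Γ.ρ (root u))) (Γ.ρ u) :=
        (strip_continuous _).continuousAt.comp ((invn_continuousOn _).continuousAt
          (isOpen_compl_singleton.mem_nhds (hout u (by omega))))
      exact hc.continuousWithinAt.mem_closure_image hSu

/-- Every `n`-vertex planar graph contains a vertex subset `V'` with `2·|V'| ≥ n`
inducing an outerplanar subgraph. -/
theorem exists_outerplanar_induced {V : Type} [Fintype V]
    (G : SimpleGraph V) (n : ℕ) (hn : Fintype.card V = n)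
    (hplanar : Nonempty (PlanarDrawing G)) :
    ∃ V' : Finset V, n ≤ 2 * V'.card ∧
      ∃ Γ' : PlanarDrawing (G.induce (↑V' : Set V)), IsOuterplaneDrawing Γ' := by
  classical
  obtain ⟨Γ⟩ := hplanar
  obtain ⟨root, δ, hroot, h0, hroot0, hpred, hle⟩ := exists_layers G
  have hmain : ∀ V' : Finset V, (∀ a ∈ V', ∀ b ∈ V', δ a % 2 = δ b % 2) →
      ∃ Γ' : PlanarDrawing (G.induce (↑V' : Set V)), IsOuterplaneDrawing Γ' := by
    intro V' h
    refine outerplanar_of_parity Γ root δ hroot h0 hroot0 hpred V' ?_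
    intro a ha b hb hab
    have h1 := hle a b hab
    have h2 := hle b a hab.symm
    have h3 := h a ha b hb
    omega
  have hcard := Finset.card_filter_add_card_filter_not (s := (Finset.univ : Finset V))
    (fun v => δ v % 2 = 0)
  rw [Finset.card_univ, hn] at hcard
  by_cases hc : n ≤ 2 * (Finset.univ.filter (fun v => δ v % 2 = 0)).card
  · refine ⟨_, hc, hmain _ ?_⟩
    intro a ha b hb
    rw [(Finset.mem_filter.1 ha).2, (Finset.mem_filter.1 hb).2]
  · refine ⟨Finset.univ.filter (fun v => ¬ δ v % 2 = 0), by omega, hmain _ ?_⟩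
    intro a ha b hb
    have h1 := (Finset.mem_filter.1 ha).2
    have h2 := (Finset.mem_filter.1 hb).2
    omega
end
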